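/- arXiv:1712.04549 — 3 statements merged into one kernel-verified Lean document; each statement's English description precedes it below -/
import Mathlib

section
/- Let a ≥ 1 be an integer and let T be a forest of path-width at least a. Then there exists a homeomorphic embedding of CT_{a−1} into T. -/
/-!
Common definitions: minors, widths, connectivity, the specific graphs
`K4`, `K23`, `C32`, `graphA`, the binary trees `CT_h`, the graphs `𝒫_k`, `𝒬_k`,
the trees `T_h`, homeomorphic embeddings, cascades, and related notions,
following Dang--Thomas, "Minors of two-connected graphs of large path-width".
-/

open SimpleGraph

/-- A minor model of `H` in `G`: branch sets `f w` are nonempty, connected,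
pairwise disjoint, and edges of `H` are realized by edges of `G` between branch sets. -/
def IsMinorModel {W V : Type*} (H : SimpleGraph W) (G : SimpleGraph V) (f : W → Set V) : Prop :=
  (∀ w, (f w).Nonempty) ∧
  (∀ w, (G.induce (f w)).Connected) ∧
  (∀ w₁ w₂ : W, w₁ ≠ w₂ → Disjoint (f w₁) (f w₂)) ∧
  (∀ w₁ w₂ : W, H.Adj w₁ w₂ → ∃ v₁ ∈ f w₁, ∃ v₂ ∈ f w₂, G.Adj v₁ v₂)

/-- `H` is (isomorphic to) a minor of `G`. -/
def IsMinor {W V : Type*} (H : SimpleGraph W) (G : SimpleGraph V) : Prop :=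
  ∃ f : W → Set V, IsMinorModel H G f

/-- The complete graph on four vertices. -/
def K4 : SimpleGraph (Fin 4) := ⊤

/-- The complete bipartite graph `K_{2,3}`. -/
def K23 : SimpleGraph (Fin 2 ⊕ Fin 3) := completeBipartiteGraph (Fin 2) (Fin 3)

/-- The graph `A`: a cycle `a₁a₂a₃a₄a₅a₆a₁` plus the edges `a₁a₃`, `a₃a₅`, `a₅a₁`. -/
def graphA : SimpleGraph (Fin 6) :=
  SimpleGraph.fromEdgeSet
    {s(0, 1), s(1, 2), s(2, 3), s(3, 4), s(4, 5), s(5, 0), s(0, 2), s(2, 4), s(4, 0)}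

/-- The graph `C_{3,2}`: two disjoint triangles. -/
def C32 : SimpleGraph (Fin 2 × Fin 3) :=
  SimpleGraph.fromRel (fun u v => u.1 = v.1)

/-- A graph is outerplanar iff it has no `K₄` minor and no `K_{2,3}` minor
(the classical characterization of outerplanarity). -/
def Outerplanar {V : Type*} (G : SimpleGraph V) : Prop :=
  ¬ IsMinor K4 G ∧ ¬ IsMinor K23 G

/-- `G` is `k`-connected: it has more than `k` vertices and deleting fewer than `k`
vertices leaves a connected graph. -/
def IsKConnected {V : Type*} [Fintype V] (k : ℕ) (G : SimpleGraph V) : Prop :=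
  k + 1 ≤ Fintype.card V ∧
  ∀ S : Finset V, S.card < k → (G.induce ((↑S : Set V)ᶜ)).Connected

/-- `(Tr, X)` is a tree-decomposition of `G`: `Tr` is a tree, the bags `X t` cover all
vertices and edges (W1), and whenever `t₂` lies on the path of `Tr` between `t₁` and `t₃`
we have `X t₁ ∩ X t₃ ⊆ X t₂` (W2). -/
def IsTreeDecomp {V T : Type*} (G : SimpleGraph V) (Tr : SimpleGraph T) (X : T → Finset V) :
    Prop :=
  Tr.IsTree ∧
  (∀ v : V, ∃ t, v ∈ X t) ∧
  (∀ u v : V, G.Adj u v → ∃ t, u ∈ X t ∧ v ∈ X t) ∧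
  (∀ (t₁ t₂ t₃ : T) (p : Tr.Walk t₁ t₃), p.IsPath → t₂ ∈ p.support →
    ∀ v : V, v ∈ X t₁ → v ∈ X t₃ → v ∈ X t₂)

/-- A path-decomposition of `G`, with bags indexed by `Fin n`. -/
def IsPathDecomp {V : Type*} (G : SimpleGraph V) {n : ℕ} (X : Fin n → Finset V) : Prop :=
  (∀ v : V, ∃ i, v ∈ X i) ∧
  (∀ u v : V, G.Adj u v → ∃ i, u ∈ X i ∧ v ∈ X i) ∧
  (∀ i j k : Fin n, i ≤ j → j ≤ k → ∀ v : V, v ∈ X i → v ∈ X k → v ∈ X j)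

/-- The path-width of a finite graph: the least `w` such that `G` has a
path-decomposition all of whose bags have at most `w + 1` vertices. -/
noncomputable def pathwidth {V : Type*} [Fintype V] (G : SimpleGraph V) : ℕ :=
  sInf {w | ∃ (n : ℕ) (X : Fin n → Finset V), IsPathDecomp G X ∧ ∀ i, (X i).card ≤ w + 1}

/-- The tree-width of a finite graph: the least `w` such that `G` has a
tree-decomposition all of whose bags have at most `w + 1` vertices. -/
noncomputable def treewidth {V : Type*} [Fintype V] (G : SimpleGraph V) : ℕ :=
  sInf {w | ∃ (T : Type) (_ : Fintype T) (Tr : SimpleGraph T) (X : T → Finset V),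
    IsTreeDecomp G Tr X ∧ ∀ t, (X t).card ≤ w + 1}

/-- Vertices of the binary tree `CT_h`: paths from the root, recorded as reversed
lists of left/right moves, of length at most `h`. -/
abbrev CTVert (h : ℕ) := {l : List Bool // l.length ≤ h}

/-- The binary tree `CT_h` of height `h`. -/
def CTgraph (h : ℕ) : SimpleGraph (CTVert h) :=
  SimpleGraph.fromEdgeSet
    {e | ∃ (b : Bool) (σ : List Bool) (hσ : σ.length < h),
      e = s((⟨σ, le_of_lt hσ⟩ : CTVert h), (⟨b :: σ, by simpa using hσ⟩ : CTVert h))}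

/-- The graph `𝒫_k`: the binary tree `CT_k` together with one extra vertex (`none`)
adjacent to every leaf of `CT_k`. -/
def Pgraph (k : ℕ) : SimpleGraph (Option (CTVert k)) :=
  SimpleGraph.fromEdgeSet
    ({e | ∃ (b : Bool) (σ : List Bool) (hσ : σ.length < k),
        e = s(some (⟨σ, le_of_lt hσ⟩ : CTVert k), some (⟨b :: σ, by simpa using hσ⟩ : CTVert k))} ∪
     {e | ∃ l : CTVert k, l.1.length = k ∧ e = s(none, some l)})

/-- Vertices of `𝒬_k`: the two base vertices of the root triangle (`Sum.inl false` and
`Sum.inl true`), together with one apex vertex for each node of the complete binary tree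
of depth `< k` (recorded as a reversed list of moves). -/
abbrev QVert (k : ℕ) := Bool ⊕ {l : List Bool // l.length < k}

/-- The two ends of the base edge of the copy of the triangle at node `σ` of `𝒬_k`. -/
def qbase (k : ℕ) : List Bool → QVert k × QVert k
  | [] => (Sum.inl false, Sum.inl true)
  | b :: σ =>
      ((if b then (qbase k σ).2 else (qbase k σ).1),
        if h : σ.length < k then Sum.inr ⟨σ, h⟩ else Sum.inl false)

/-- The graph `𝒬_k`, built from triangles as in the recursive definition: the triangle at
node `σ` consists of the base edge `qbase k σ` together with the apex vertex `Sum.inr σ`;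
the base edge of `𝒬_k` is `s(Sum.inl false, Sum.inl true)`. -/
def Qgraph (k : ℕ) : SimpleGraph (QVert k) :=
  SimpleGraph.fromEdgeSet
    ({s(Sum.inl false, Sum.inl true)} ∪
     {e | ∃ (σ : List Bool) (h : σ.length < k),
        e = s(Sum.inr ⟨σ, h⟩, (qbase k σ).1) ∨ e = s(Sum.inr ⟨σ, h⟩, (qbase k σ).2)})

/-- The minor vertices of the tree `T_h` (one for each string of length `≤ h`). -/
abbrev MVert (h : ℕ) := {l : List Bool // l.length ≤ h}

/-- The major vertices of the tree `T_h` (one for each string of length `≤ h - 1`). -/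
abbrev JVert (h : ℕ) := {l : List Bool // l.length + 1 ≤ h}

/-- Vertices of the tree `T_h` (obtained from `CT_h` by subdividing every edge not incident
with a degree-one vertex and adding the minor root). -/
abbrev TVert (h : ℕ) := MVert h ⊕ JVert h

/-- The tree `T_h`: each major vertex `σ` is adjacent to the minor vertices `σ` (its parent),
`false :: σ` (its left neighbor) and `true :: σ` (its right neighbor). -/
def Tgraph (h : ℕ) : SimpleGraph (TVert h) :=
  SimpleGraph.fromEdgeSet
    {e | ∃ (σ : List Bool) (hσ : σ.length + 1 ≤ h),
      e = s(Sum.inr ⟨σ, hσ⟩, Sum.inl ⟨σ, Nat.le_of_succ_le hσ⟩) ∨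
      ∃ b : Bool, e = s(Sum.inr ⟨σ, hσ⟩, Sum.inl ⟨b :: σ, by simpa using hσ⟩)}

/-- A homeomorphic embedding of `TA` into `TB`: an injection such that for any two edges of
`TA` sharing an end `t`, the corresponding paths of `TB` are edge-disjoint. -/
def IsHomeoEmb {A B : Type*} (TA : SimpleGraph A) (TB : SimpleGraph B) (η : A → B) : Prop :=
  Function.Injective η ∧
  ∀ ⦃t t₁ t₂ : A⦄, TA.Adj t t₁ → TA.Adj t t₂ → t₁ ≠ t₂ →
    ∀ (p₁ : TB.Walk (η t) (η t₁)) (p₂ : TB.Walk (η t) (η t₂)),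
      p₁.IsPath → p₂.IsPath → ∀ e ∈ p₁.edges, e ∉ p₂.edges

/-- `v` lies in the span of `η`: it lies on a path of `TB` between two vertices in the
image of `η`. -/
def inSpan {A B : Type*} (TB : SimpleGraph B) (η : A → B) (v : B) : Prop :=
  ∃ (a₁ a₂ : A) (p : TB.Walk (η a₁) (η a₂)), p.IsPath ∧ v ∈ p.support

/-- A cascade of height `h` and size `s` in the tree-decomposition `(Tr, X)`:
a homeomorphic embedding of `T_h` with `|X (η t)| = s` for every minor vertex `t`
and `|X t| ≥ s` for every `t` in the span. -/
def IsCascade {V T : Type*} (Tr : SimpleGraph T) (X : T → Finset V) (h s : ℕ)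
    (η : TVert h → T) : Prop :=
  IsHomeoEmb (Tgraph h) Tr η ∧
  (∀ l : MVert h, (X (η (Sum.inl l))).card = s) ∧
  (∀ t : T, inSpan Tr η t → s ≤ (X t).card)

/-- An injective cascade with common intersection set `I`. -/
def IsInjectiveCascade {V T : Type*} (Tr : SimpleGraph T) (X : T → Finset V) (h s : ℕ)
    (η : TVert h → T) (I : Finset V) : Prop :=
  IsCascade Tr X h s η ∧ I.card < s ∧
  ∀ t t' : TVert h, t ≠ t' → ((X (η t) : Set V) ∩ (X (η t') : Set V)) = (I : Set V)

/-- A family of `s` disjoint paths in `G \ I` (a linkage). -/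
def IsLinkage {V : Type*} (G : SimpleGraph V) (I : Finset V) {s : ℕ} {x y : Fin s → V}
    (P : ∀ i : Fin s, G.Walk (x i) (y i)) : Prop :=
  (∀ i, (P i).IsPath) ∧
  (∀ i, ∀ v ∈ (P i).support, v ∉ I) ∧
  (∀ i j, i ≠ j → ∀ v ∈ (P i).support, v ∉ (P j).support)

/-- An ordered cascade: an injective cascade of size `s + |I|` with common intersection set
`I`, together with orderings `ξ t : Fin s → X (η t) \ I` of the bags at minor vertices, such
that at every major vertex there are left and right linkages connecting corresponding
vertices. -/
def IsOrderedCascade {V T : Type*} (G : SimpleGraph V) (Tr : SimpleGraph T)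
    (X : T → Finset V) (h s : ℕ) (η : TVert h → T) (I : Finset V)
    (ξ : MVert h → Fin s → V) : Prop :=
  IsInjectiveCascade Tr X h (s + I.card) η I ∧
  (∀ t : MVert h, Function.Injective (ξ t) ∧
    Set.range (ξ t) = (X (η (Sum.inl t)) : Set V) \ (I : Set V)) ∧
  ∀ (σ : List Bool) (hσ : σ.length + 1 ≤ h),
    (∃ P : ∀ i : Fin s,
        G.Walk (ξ ⟨σ, Nat.le_of_succ_le hσ⟩ i) (ξ ⟨false :: σ, by simpa using hσ⟩ i),
      IsLinkage G I P) ∧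
    (∃ Q : ∀ i : Fin s,
        G.Walk (ξ ⟨σ, Nat.le_of_succ_le hσ⟩ i) (ξ ⟨true :: σ, by simpa using hσ⟩ i),
      IsLinkage G I Q)

/-- The vertex set of the `η`-torso at the major vertex `σ` of `T_h`: the union of the bags
`X t - I` over all `t` such that the path in `Tr` from `t` to `η σ` contains none of the
images of the three minor neighbors of `σ` as an internal vertex. -/
def torsoSet {V T : Type*} (Tr : SimpleGraph T) (X : T → Finset V) {h : ℕ}
    (η : TVert h → T) (I : Finset V) (σ : List Bool) (hσ : σ.length + 1 ≤ h) : Set V :=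
  {v | v ∉ I ∧ ∃ t : T,
    (∀ p : Tr.Walk t (η (Sum.inr ⟨σ, hσ⟩)), p.IsPath →
      ∀ u : T,
        (u = η (Sum.inl ⟨σ, Nat.le_of_succ_le hσ⟩) ∨
         u = η (Sum.inl ⟨false :: σ, by simpa using hσ⟩) ∨
         u = η (Sum.inl ⟨true :: σ, by simpa using hσ⟩)) →
        u ∈ p.support → u = t ∨ u = η (Sum.inr ⟨σ, hσ⟩)) ∧
    v ∈ X t}

/-- `H` is a tripod in `G` with all vertices in `S`, center `c` and feet `f₁, f₂, f₃`:
the union of three paths from `c` to the feet, pairwise disjoint except for `c`,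
at least two of which have length at least one. -/
def IsTripodOn {V : Type*} (G : SimpleGraph V) (S : Set V) (H : G.Subgraph)
    (c f₁ f₂ f₃ : V) : Prop :=
  ∃ (W₁ : G.Walk c f₁) (W₂ : G.Walk c f₂) (W₃ : G.Walk c f₃),
    W₁.IsPath ∧ W₂.IsPath ∧ W₃.IsPath ∧
    (∀ v ∈ W₁.support, v ∈ S) ∧ (∀ v ∈ W₂.support, v ∈ S) ∧ (∀ v ∈ W₃.support, v ∈ S) ∧
    (∀ v, v ∈ W₁.support → v ∈ W₂.support → v = c) ∧
    (∀ v, v ∈ W₁.support → v ∈ W₃.support → v = c) ∧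
    (∀ v, v ∈ W₂.support → v ∈ W₃.support → v = c) ∧
    ((1 ≤ W₁.length ∧ 1 ≤ W₂.length) ∨ (1 ≤ W₁.length ∧ 1 ≤ W₃.length) ∨
      (1 ≤ W₂.length ∧ 1 ≤ W₃.length)) ∧
    H = W₁.toSubgraph ⊔ W₂.toSubgraph ⊔ W₃.toSubgraph

/-- The major vertex `σ` has property `A_{ij}` in the ordered cascade `η` with orderings
`ξ`: there are two disjoint tripods in the `η`-torso at `σ`, with feet as prescribed. -/
def HasPropA {V T : Type*} (G : SimpleGraph V) (Tr : SimpleGraph T) (X : T → Finset V)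
    {h s : ℕ} (η : TVert h → T) (I : Finset V) (ξ : MVert h → Fin s → V)
    (σ : List Bool) (hσ : σ.length + 1 ≤ h) (i j : Fin s) : Prop :=
  ∃ (Li Lj : G.Subgraph) (ci cj : V),
    (∃ m₂ m₃ : Fin s, (m₂ = i ∨ m₂ = j) ∧ (m₃ = i ∨ m₃ = j) ∧
      IsTripodOn G (torsoSet Tr X η I σ hσ) Li ci
        (ξ ⟨σ, Nat.le_of_succ_le hσ⟩ i)
        (ξ ⟨false :: σ, by simpa using hσ⟩ m₂)
        (ξ ⟨true :: σ, by simpa using hσ⟩ m₃)) ∧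
    (∃ m₂ m₃ : Fin s, (m₂ = i ∨ m₂ = j) ∧ (m₃ = i ∨ m₃ = j) ∧
      IsTripodOn G (torsoSet Tr X η I σ hσ) Lj cj
        (ξ ⟨σ, Nat.le_of_succ_le hσ⟩ j)
        (ξ ⟨false :: σ, by simpa using hσ⟩ m₂)
        (ξ ⟨true :: σ, by simpa using hσ⟩ m₃)) ∧
    Disjoint Li.verts Lj.verts

/-- The major vertex `σ` has property `B_{ij}`: there are two tripods `L_i`, `L_j` in the
`η`-torso at `σ`, with feet `v_{m,1}, v_{m,2}, v_{m,3}` where `{v_{i,y}, v_{j,y}}` equals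
`{ξ_{t_y} i, ξ_{t_y} j}` for each `y`, which intersect exactly in a path that is the
intersection of the branch of `L_i` to `v_{i,3}` and the branch of `L_j` to `v_{j,2}`,
and which avoids both centers. -/
def HasPropB {V T : Type*} (G : SimpleGraph V) (Tr : SimpleGraph T) (X : T → Finset V)
    {h s : ℕ} (η : TVert h → T) (I : Finset V) (ξ : MVert h → Fin s → V)
    (σ : List Bool) (hσ : σ.length + 1 ≤ h) (i j : Fin s) : Prop :=
  ∃ (vi vj : Fin 3 → V) (ci cj : V)
    (Wi : ∀ y : Fin 3, G.Walk ci (vi y)) (Wj : ∀ y : Fin 3, G.Walk cj (vj y)),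
    (∀ y : Fin 3, ({vi y, vj y} : Set V) =
      {(![ξ ⟨σ, Nat.le_of_succ_le hσ⟩,
          ξ ⟨false :: σ, by simpa using hσ⟩,
          ξ ⟨true :: σ, by simpa using hσ⟩] : Fin 3 → Fin s → V) y i,
       (![ξ ⟨σ, Nat.le_of_succ_le hσ⟩,
          ξ ⟨false :: σ, by simpa using hσ⟩,
          ξ ⟨true :: σ, by simpa using hσ⟩] : Fin 3 → Fin s → V) y j}) ∧
    (∀ y, (Wi y).IsPath) ∧ (∀ y, (Wj y).IsPath) ∧
    (∀ y, ∀ v ∈ (Wi y).support, v ∈ torsoSet Tr X η I σ hσ) ∧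
    (∀ y, ∀ v ∈ (Wj y).support, v ∈ torsoSet Tr X η I σ hσ) ∧
    (∀ y y' : Fin 3, y ≠ y' → ∀ v, v ∈ (Wi y).support → v ∈ (Wi y').support → v = ci) ∧
    (∀ y y' : Fin 3, y ≠ y' → ∀ v, v ∈ (Wj y).support → v ∈ (Wj y').support → v = cj) ∧
    ((1 ≤ (Wi 0).length ∧ 1 ≤ (Wi 1).length) ∨ (1 ≤ (Wi 0).length ∧ 1 ≤ (Wi 2).length) ∨
      (1 ≤ (Wi 1).length ∧ 1 ≤ (Wi 2).length)) ∧
    ((1 ≤ (Wj 0).length ∧ 1 ≤ (Wj 1).length) ∨ (1 ≤ (Wj 0).length ∧ 1 ≤ (Wj 2).length) ∨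
      (1 ≤ (Wj 1).length ∧ 1 ≤ (Wj 2).length)) ∧
    (((Wi 0).toSubgraph ⊔ (Wi 1).toSubgraph ⊔ (Wi 2).toSubgraph) ⊓
      ((Wj 0).toSubgraph ⊔ (Wj 1).toSubgraph ⊔ (Wj 2).toSubgraph)
        = (Wi 2).toSubgraph ⊓ (Wj 1).toSubgraph) ∧
    ∃ (x y : V) (p : G.Walk x y), p.IsPath ∧
      (Wi 2).toSubgraph ⊓ (Wj 1).toSubgraph = p.toSubgraph ∧
      ci ∉ p.support ∧ cj ∉ p.support

/-- The major vertex `σ` has property `AB_{ij}`: in the `η`-torso at `σ` there are disjoint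
paths `L_i, L_j` from `ξ_{t₁}(m)` to `ξ_{t₂}(m)` and disjoint paths `R_i, R_j` from
`ξ_{t₁}(m)` to `ξ_{t₃}(m)`, for `m ∈ {i, j}`. -/
def HasPropAB {V T : Type*} (G : SimpleGraph V) (Tr : SimpleGraph T) (X : T → Finset V)
    {h s : ℕ} (η : TVert h → T) (I : Finset V) (ξ : MVert h → Fin s → V)
    (σ : List Bool) (hσ : σ.length + 1 ≤ h) (i j : Fin s) : Prop :=
  ∃ (Li : G.Walk (ξ ⟨σ, Nat.le_of_succ_le hσ⟩ i) (ξ ⟨false :: σ, by simpa using hσ⟩ i))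
    (Lj : G.Walk (ξ ⟨σ, Nat.le_of_succ_le hσ⟩ j) (ξ ⟨false :: σ, by simpa using hσ⟩ j))
    (Ri : G.Walk (ξ ⟨σ, Nat.le_of_succ_le hσ⟩ i) (ξ ⟨true :: σ, by simpa using hσ⟩ i))
    (Rj : G.Walk (ξ ⟨σ, Nat.le_of_succ_le hσ⟩ j) (ξ ⟨true :: σ, by simpa using hσ⟩ j)),
    Li.IsPath ∧ Lj.IsPath ∧ Ri.IsPath ∧ Rj.IsPath ∧
    (∀ v ∈ Li.support, v ∈ torsoSet Tr X η I σ hσ) ∧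
    (∀ v ∈ Lj.support, v ∈ torsoSet Tr X η I σ hσ) ∧
    (∀ v ∈ Ri.support, v ∈ torsoSet Tr X η I σ hσ) ∧
    (∀ v ∈ Rj.support, v ∈ torsoSet Tr X η I σ hσ) ∧
    (∀ v ∈ Li.support, v ∉ Lj.support) ∧
    (∀ v ∈ Ri.support, v ∉ Rj.support)

/-- A monotone homeomorphic embedding `T_a ↪ T_h`: the minor root maps to the minor root,
and for every major vertex with trinity `(t₁, t₂, t₃)`, the images of `t₂` and `t₃` are the
left and right neighbors of the (major) image of the vertex. -/
def IsMonotoneEmb (a h : ℕ) (γ : TVert a → TVert h) : Prop :=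
  IsHomeoEmb (Tgraph a) (Tgraph h) γ ∧
  γ (Sum.inl ⟨[], Nat.zero_le a⟩) = Sum.inl ⟨[], Nat.zero_le h⟩ ∧
  ∀ (σ : List Bool) (hσ : σ.length + 1 ≤ a),
    ∃ (τ : List Bool) (hτ : τ.length + 1 ≤ h),
      γ (Sum.inr ⟨σ, hσ⟩) = Sum.inr ⟨τ, hτ⟩ ∧
      γ (Sum.inl ⟨false :: σ, by simpa using hσ⟩) = Sum.inl ⟨false :: τ, by simpa using hτ⟩ ∧
      γ (Sum.inl ⟨true :: σ, by simpa using hσ⟩) = Sum.inl ⟨true :: τ, by simpa using hτ⟩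


section PWHelpers

open Relation

/-- Consecutiveness property for a list of bags. -/
def PWConv {V : Type} : List (Finset V) → Prop
  | [] => True
  | X :: L => PWConv L ∧ ∀ v ∈ X, (∃ Y ∈ L, v ∈ Y) → ∃ Y, L.head? = some Y ∧ v ∈ Y

/-- `L` is a path decomposition of `G[S]` with bags of size at most `w`. -/
def PWIs {V : Type} (G : SimpleGraph V) (S : Finset V) (w : ℕ) (L : List (Finset V)) : Prop :=
  (∀ X ∈ L, X ⊆ S) ∧ (∀ v ∈ S, ∃ X ∈ L, v ∈ X) ∧
  (∀ u ∈ S, ∀ v ∈ S, G.Adj u v → ∃ X ∈ L, u ∈ X ∧ v ∈ X) ∧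
  (∀ X ∈ L, X.card ≤ w) ∧ PWConv L

theorem pwconv_append {V : Type} (L₁ L₂ : List (Finset V)) (h₁ : PWConv L₁) (h₂ : PWConv L₂)
    (hd : ∀ X ∈ L₁, ∀ Y ∈ L₂, ∀ v ∈ X, v ∉ Y) : PWConv (L₁ ++ L₂) := by
  induction L₁ with
  | nil => simpa using h₂
  | cons X L ih =>
    obtain ⟨ha, hb⟩ := h₁
    refine ⟨ih ha (fun Y hY => hd Y (by simp [hY])), ?_⟩
    rintro v hv ⟨Y, hY, hvY⟩
    rcases List.mem_append.1 hY with hY | hY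
    · obtain ⟨Z, hZ, hvZ⟩ := hb v hv ⟨Y, hY, hvY⟩
      exact ⟨Z, by simp [List.head?_append, hZ], hvZ⟩
    · exact absurd hvY (hd X (by simp) Y hY v hv)

open Classical in
theorem pwconv_cone {V : Type} (v : V) (L₁ T : List (Finset V)) (h₁ : PWConv L₁) (h₂ : PWConv T)
    (hT : ∃ Y, T.head? = some Y ∧ v ∈ Y)
    (hd : ∀ X ∈ L₁, ∀ Y ∈ T, ∀ x ∈ X, x ∉ Y) : PWConv (L₁.map (insert v) ++ T) := by
  induction L₁ with
  | nil => simpa using h₂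
  | cons X L ih =>
    obtain ⟨ha, hb⟩ := h₁
    refine ⟨ih ha (fun Y hY => hd Y (by simp [hY])), ?_⟩
    rintro u hu ⟨Y, hY, huY⟩
    by_cases huv : u = v
    · subst huv
      cases L with
      | nil => simpa using hT
      | cons Z L => exact ⟨insert u Z, by simp, by simp⟩
    · have huX : u ∈ X := by simpa [huv] using hu
      rcases List.mem_append.1 hY with hY | hY
      · obtain ⟨Y', hY', rfl⟩ := List.mem_map.1 hY
        obtain ⟨Z, hZ, huZ⟩ := hb u huX ⟨Y', hY', by simpa [huv] using huY⟩
        exact ⟨insert v Z, by simp [List.head?_append, hZ], by simp [huZ]⟩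
      · exact absurd huY (hd X (by simp) Y hY u huX)

theorem pwconv_get {V : Type} (L : List (Finset V)) (h : PWConv L) (v : V) :
    ∀ (i j k : ℕ) (hk : k < L.length) (hij : i ≤ j) (hjk : j ≤ k),
      v ∈ L[i] → v ∈ L[k] → v ∈ L[j] := by
  induction L with
  | nil => intro i j k hk; simp at hk
  | cons X L ih =>
    obtain ⟨ha, hb⟩ := h
    intro i j k hk hij hjk hi hk'
    cases j with
    | zero =>
      obtain rfl : i = 0 := by omega
      exact hi
    | succ j =>
      cases k with
      | zero => omega
      | succ k =>
        simp only [List.length_cons] at hk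
        simp only [List.getElem_cons_succ] at hk' ⊢
        cases i with
        | succ i =>
          simp only [List.getElem_cons_succ] at hi
          exact ih ha i j k (by omega) (by omega) (by omega) hi hk'
        | zero =>
          simp only [List.getElem_cons_zero] at hi
          obtain ⟨Y, hY, hvY⟩ := hb v hi ⟨_, List.getElem_mem (by omega), hk'⟩
          refine ih ha 0 j k (by omega) (by omega) (by omega) ?_ hk'
          cases L with
          | nil => simp at hY
          | cons Z L => simp at hY; subst hY; simpa using hvY

theorem pathwidth_le_of_pwis {V : Type} [Fintype V] (G : SimpleGraph V) (w : ℕ)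
    (L : List (Finset V)) (h : PWIs G Finset.univ (w + 1) L) : pathwidth G ≤ w := by
  obtain ⟨-, h2, h3, h4, h5⟩ := h
  apply Nat.sInf_le
  refine ⟨L.length, fun i => L[i], ⟨?_, ?_, ?_⟩, ?_⟩
  · intro v
    obtain ⟨X, hX, hv⟩ := h2 v (by simp)
    obtain ⟨i, hi, rfl⟩ := List.getElem_of_mem hX
    exact ⟨⟨i, hi⟩, hv⟩
  · intro u v huv
    obtain ⟨X, hX, hv⟩ := h3 u (by simp) v (by simp) huv
    obtain ⟨i, hi, rfl⟩ := List.getElem_of_mem hX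
    exact ⟨⟨i, hi⟩, hv⟩
  · intro i j k hij hjk v hi hk
    exact pwconv_get L h5 v i j k k.2 hij hjk hi hk
  · intro i
    exact h4 _ (List.getElem_mem _)

open Classical in
theorem pwis_union {V : Type} (G : SimpleGraph V) (S₁ S₂ : Finset V) (w : ℕ)
    (L₁ L₂ : List (Finset V)) (h₁ : PWIs G S₁ w L₁) (h₂ : PWIs G S₂ w L₂)
    (hd : Disjoint S₁ S₂) (hadj : ∀ u ∈ S₁, ∀ v ∈ S₂, ¬ G.Adj u v) :
    PWIs G (S₁ ∪ S₂) w (L₁ ++ L₂) := by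
  obtain ⟨a1, a2, a3, a4, a5⟩ := h₁
  obtain ⟨b1, b2, b3, b4, b5⟩ := h₂
  refine ⟨?_, ?_, ?_, ?_, ?_⟩
  · intro X hX
    rcases List.mem_append.1 hX with hX | hX
    · exact (a1 X hX).trans Finset.subset_union_left
    · exact (b1 X hX).trans Finset.subset_union_right
  · intro v hv
    rcases Finset.mem_union.1 hv with hv | hv
    · obtain ⟨X, hX, h⟩ := a2 v hv
      exact ⟨X, by simp [hX], h⟩
    · obtain ⟨X, hX, h⟩ := b2 v hv
      exact ⟨X, by simp [hX], h⟩
  · intro u hu v hv huv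
    rcases Finset.mem_union.1 hu with hu | hu <;> rcases Finset.mem_union.1 hv with hv | hv
    · obtain ⟨X, hX, h⟩ := a3 u hu v hv huv
      exact ⟨X, by simp [hX], h⟩
    · exact absurd huv (hadj u hu v hv)
    · exact absurd huv.symm (hadj v hv u hu)
    · obtain ⟨X, hX, h⟩ := b3 u hu v hv huv
      exact ⟨X, by simp [hX], h⟩
  · intro X hX
    rcases List.mem_append.1 hX with hX | hX
    · exact a4 X hX
    · exact b4 X hX
  · refine pwconv_append _ _ a5 b5 ?_
    intro X hX Y hY v hv hv'
    exact Finset.disjoint_left.1 hd (a1 X hX hv) (b1 Y hY hv')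

open Classical in
theorem pwis_biUnion {V : Type} (G : SimpleGraph V) (w : ℕ) (D : V → Finset V) (I : Finset V)
    (h : ∀ i ∈ I, ∃ L, PWIs G (D i) w L)
    (hd : ∀ i ∈ I, ∀ j ∈ I, i ≠ j → Disjoint (D i) (D j) ∧
      ∀ u ∈ D i, ∀ v ∈ D j, ¬ G.Adj u v) :
    ∃ L, PWIs G (I.biUnion D) w L := by
  induction I using Finset.induction_on with
  | empty => exact ⟨[], by simp [PWIs, PWConv]⟩
  | insert a I ha ih =>
    obtain ⟨L₂, h₂⟩ := ih (fun i hi => h i (by simp [hi]))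
      (fun i hi j hj => hd i (by simp [hi]) j (by simp [hj]))
    obtain ⟨L₁, h₁⟩ := h a (by simp)
    have key : ∀ j ∈ I, a ≠ j := by rintro j hj rfl; exact ha hj
    rw [Finset.biUnion_insert]
    refine ⟨_, pwis_union G _ _ w L₁ L₂ h₁ h₂ ?_ ?_⟩
    · rw [Finset.disjoint_biUnion_right]
      intro j hj
      exact (hd a (by simp) j (by simp [hj]) (key j hj)).1
    · intro u hu v hv
      obtain ⟨j, hj, hv⟩ := Finset.mem_biUnion.1 hv
      exact (hd a (by simp) j (by simp [hj]) (key j hj)).2 u hu v hv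

open Classical in
/-- Generic cone step. -/
theorem pwis_cone {V : Type} (G : SimpleGraph V) (S U : Finset V) (w : ℕ) (v : V)
    (L T : List (Finset V)) (h₁ : PWIs G S w L) (h₂ : PWIs G U (w + 1) T)
    (hv : ∃ Y, T.head? = some Y ∧ v ∈ Y)
    (hd : Disjoint S U) (hadj : ∀ u ∈ S, ∀ x ∈ U, G.Adj u x → x = v) :
    PWIs G (S ∪ U) (w + 1) ((L.map (insert v)) ++ T) := by
  obtain ⟨a1, a2, a3, a4, a5⟩ := h₁
  obtain ⟨b1, b2, b3, b4, b5⟩ := h₂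
  have hvU : v ∈ U := by
    obtain ⟨Y, hY, h⟩ := hv
    exact b1 Y (List.mem_of_mem_head? hY) h
  refine ⟨?_, ?_, ?_, ?_, ?_⟩
  · intro X hX
    rcases List.mem_append.1 hX with hX | hX
    · obtain ⟨X, hX0, rfl⟩ := List.mem_map.1 hX
      intro x hx
      rcases Finset.mem_insert.1 hx with rfl | hx
      · simp [hvU]
      · simp [a1 X hX0 hx]
    · exact (b1 X hX).trans Finset.subset_union_right
  · intro u hu
    rcases Finset.mem_union.1 hu with hv | hv
    · obtain ⟨X, hX, h⟩ := a2 u hv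
      exact ⟨insert v X, List.mem_append_left _ (List.mem_map_of_mem hX), by simp [h]⟩
    · obtain ⟨X, hX, h⟩ := b2 u hv
      exact ⟨X, by simp [hX], h⟩
  · have cross : ∀ u ∈ S, ∀ x ∈ U, G.Adj u x →
        ∃ X ∈ L.map (insert v) ++ T, u ∈ X ∧ x ∈ X := by
      intro u hu x hx hux
      obtain rfl := hadj u hu x hx hux
      obtain ⟨X, hX, h⟩ := a2 u hu
      exact ⟨insert x X, List.mem_append_left _ (List.mem_map_of_mem hX), by simp [h]⟩
    intro u hu x hx huv
    rcases Finset.mem_union.1 hu with hu | hu <;> rcases Finset.mem_union.1 hx with hx | hx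
    · obtain ⟨X, hX, h⟩ := a3 u hu x hx huv
      exact ⟨insert v X, List.mem_append_left _ (List.mem_map_of_mem hX), by simp [h]⟩
    · exact cross u hu x hx huv
    · obtain ⟨X, hX, h, h'⟩ := cross x hx u hu huv.symm
      exact ⟨X, hX, h', h⟩
    · obtain ⟨X, hX, h⟩ := b3 u hu x hx huv
      exact ⟨X, by simp [hX], h⟩
  · intro X hX
    rcases List.mem_append.1 hX with hX | hX
    · obtain ⟨X, hX0, rfl⟩ := List.mem_map.1 hX
      exact (Finset.card_insert_le _ _).trans (by have := a4 X hX0; omega)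
    · exact b4 X hX
  · refine pwconv_cone v _ _ a5 b5 hv ?_
    intro X hX Y hY v hv hv'
    exact Finset.disjoint_left.1 hd (a1 X hX hv) (b1 Y hY hv')

/-- A rooted forest structure on `G`: `C u c` means `c` is a child of `u`. -/
structure PWRoot {V : Type} (G : SimpleGraph V) (C : V → V → Prop) (d : V → ℕ) : Prop where
  adj : ∀ u v, G.Adj u v ↔ C u v ∨ C v u
  rank : ∀ u v, C u v → d v = d u + 1
  uniq : ∀ u u' c, C u c → C u' c → u = u'

theorem exists_pwroot {V : Type} (G : SimpleGraph V) (hG : G.IsAcyclic) :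
    ∃ C d, PWRoot G C d := by
  let root : V → V := fun v => (G.connectedComponentMk v).out
  have hroot : ∀ v, G.Reachable (root v) v := fun v =>
    SimpleGraph.ConnectedComponent.exact (Quot.out_eq (G.connectedComponentMk v))
  have hr : ∀ u v, G.Adj u v → root u = root v := by
    intro u v h
    show (G.connectedComponentMk u).out = (G.connectedComponentMk v).out
    rw [SimpleGraph.ConnectedComponent.eq.2 h.reachable]
  refine ⟨fun u v => G.Adj u v ∧ G.dist (root v) v = G.dist (root u) u + 1,
    fun v => G.dist (root v) v, ⟨?_, fun u v h => h.2, ?_⟩⟩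
  · intro u v
    constructor
    · intro h
      have h1 := hG.dist_eq_dist_add_one_of_adj_of_reachable (root u) h (hroot u)
      have h2 := hr u v h
      rw [← h2]
      rcases h1 with h1 | h1
      · exact Or.inr ⟨h.symm, h1⟩
      · exact Or.inl ⟨h, h1⟩
    · rintro (h | h)
      · exact h.1
      · exact h.1.symm
  · rintro u u' c ⟨h1, h2⟩ ⟨h3, h4⟩
    have e1 := hr u c h1
    have e2 := hr u' c h3
    obtain ⟨p, hp⟩ := (hroot u).exists_walk_length_eq_dist
    obtain ⟨q, hq⟩ := (hroot u').exists_walk_length_eq_dist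
    have hpl : p.length + 1 = G.dist (root u) c := by rw [hp, ← h2, e1]
    have hql : q.length + 1 = G.dist (root u') c := by rw [hq, ← h4, e2]
    have e3 : root u = root u' := e1.trans e2.symm
    have aux : ∀ (r r' : V) (p : G.Walk r u) (q : G.Walk r' u'), r = r' →
        p.length + 1 = G.dist r c → q.length + 1 = G.dist r' c → u = u' := by
      rintro r _ p q rfl hp hq
      have hp' : (p.concat h1).IsPath := SimpleGraph.Walk.isPath_of_length_eq_dist _ (by simpa using hp)
      have hq' : (q.concat h3).IsPath := SimpleGraph.Walk.isPath_of_length_eq_dist _ (by simpa using hq)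
      have := congrArg Subtype.val (hG.path_unique ⟨_, hp'⟩ ⟨_, hq'⟩)
      have := congrArg SimpleGraph.Walk.penultimate this
      simpa using this
    exact aux _ _ p q e3 hpl hql

namespace PWRoot

variable {V : Type} {G : SimpleGraph V} {C : V → V → Prop} {d : V → ℕ}

theorem rank_le (H : PWRoot G C d) {u v : V} (h : ReflTransGen C u v) : d u ≤ d v := by
  induction h with
  | refl => exact le_rfl
  | tail _ h ih => have := H.rank _ _ h; omega

theorem eq_of_rank (H : PWRoot G C d) {u v : V} (h : ReflTransGen C u v) (hd : d v ≤ d u) :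
    u = v := by
  rcases ReflTransGen.cases_head h with h | ⟨c, h1, h2⟩
  · exact h
  · have := H.rank _ _ h1
    have := H.rank_le h2
    omega

theorem comparable (H : PWRoot G C d) {u v w : V} (h : ReflTransGen C u w)
    (h' : ReflTransGen C v w) : ReflTransGen C u v ∨ ReflTransGen C v u := by
  induction h with
  | refl => exact Or.inr h'
  | @tail x w h1 h2 ih =>
    rcases ReflTransGen.cases_tail h' with h | ⟨y, h3, h4⟩
    · subst h; exact Or.inl (h1.tail h2)
    · obtain rfl := H.uniq _ _ _ h2 h4
      exact ih h3

theorem eq_of_same_rank (H : PWRoot G C d) {u v w : V} (h : ReflTransGen C u w)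
    (h' : ReflTransGen C v w) (hd : d u = d v) : u = v := by
  rcases H.comparable h h' with h | h
  · exact H.eq_of_rank h hd.ge
  · exact (H.eq_of_rank h hd.le).symm

theorem sib (H : PWRoot G C d) {p u v w : V} (hu : C p u) (hv : C p v) (h : ReflTransGen C u w)
    (h' : ReflTransGen C v w) : u = v :=
  H.eq_of_same_rank h h' (by rw [H.rank _ _ hu, H.rank _ _ hv])

/-- Strict binary structure at `v`. -/
def St (C : V → V → Prop) : ℕ → V → Prop
  | 0, _ => True
  | h + 1, u => ∃ c x : Bool → V, c false ≠ c true ∧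
      ∀ b, C u (c b) ∧ ReflTransGen C (c b) (x b) ∧ St C h (x b)

/-- Some descendant carries the binary structure. -/
def Wk (C : V → V → Prop) (h : ℕ) (v : V) : Prop := ∃ u, ReflTransGen C v u ∧ St C h u

theorem wk_up {h : ℕ} {v c : V} (hc : C v c) (hw : Wk C h c) : Wk C h v := by
  obtain ⟨u, h1, h2⟩ := hw
  exact ⟨u, ReflTransGen.head hc h1, h2⟩

theorem wk_succ {h : ℕ} {v c c' : V} (hc : C v c) (hc' : C v c') (hne : c ≠ c')
    (hw : Wk C h c) (hw' : Wk C h c') : Wk C (h + 1) v := by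
  obtain ⟨u, h1, h2⟩ := hw
  obtain ⟨u', h1', h2'⟩ := hw'
  refine ⟨v, .refl, fun b => if b then c' else c, fun b => if b then u' else u, by simpa using hne, ?_⟩
  rintro (_ | _)
  · exact ⟨hc, h1, h2⟩
  · exact ⟨hc', h1', h2'⟩

open Classical in
/-- Descendants. -/
noncomputable def Ds [Fintype V] (C : V → V → Prop) (v : V) : Finset V :=
  Finset.univ.filter (fun u => ReflTransGen C v u)

theorem mem_Ds [Fintype V] {u v : V} : u ∈ Ds C v ↔ ReflTransGen C v u := by simp [Ds]

theorem ds_noadj [Fintype V] (H : PWRoot G C d) {u v : V} (hd : Disjoint (Ds C u) (Ds C v)) :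
    ∀ x ∈ Ds C u, ∀ y ∈ Ds C v, ¬ G.Adj x y := by
  intro x hx y hy hxy
  rcases (H.adj x y).1 hxy with h | h
  · exact Finset.disjoint_left.1 hd (mem_Ds.2 ((mem_Ds.1 hx).tail h)) hy
  · exact Finset.disjoint_left.1 hd hx (mem_Ds.2 ((mem_Ds.1 hy).tail h))

theorem ds_disj [Fintype V] (H : PWRoot G C d) {p u v : V} (hu : C p u) (hv : C p v) (hne : u ≠ v) :
    Disjoint (Ds C u) (Ds C v) := by
  rw [Finset.disjoint_left]
  intro x hx hy
  exact hne (H.sib hu hv (mem_Ds.1 hx) (mem_Ds.1 hy))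

theorem not_mem_child [Fintype V] (H : PWRoot G C d) {p u : V} (hu : C p u) : p ∉ Ds C u := by
  intro h
  have := H.rank_le (mem_Ds.1 h)
  have := H.rank _ _ hu
  omega

/-- Edges from a vertex to the descendants of a child. -/
theorem adj_child [Fintype V] (H : PWRoot G C d) {p u x : V} (hu : C p u) (hx : x ∈ Ds C u)
    (h : G.Adj p x) : x = u := by
  rcases (H.adj _ _).1 h with h | h
  · exact (H.sib hu h (mem_Ds.1 hx) .refl).symm
  · exact absurd (mem_Ds.2 ((mem_Ds.1 hx).tail h)) (H.not_mem_child hu)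

open Classical in
theorem pw_rec [Fintype V] (H : PWRoot G C d) (m : ℕ) :
    ∀ v, ¬ Wk C m v → ∃ L, PWIs G (Ds C v) (m + 1) L ∧ ∃ Y, L.head? = some Y ∧ v ∈ Y := by
  induction m with
  | zero => intro v hv; exact absurd ⟨v, .refl, trivial⟩ hv
  | succ m ihm =>
    -- induction on corank
    obtain ⟨N, hN⟩ : ∃ N, ∀ v, d v ≤ N :=
      ⟨Finset.univ.sup d, fun v => Finset.le_sup (f := d) (Finset.mem_univ v)⟩
    intro v
    induction hk : N - d v using Nat.strong_induction_on generalizing v with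
    | _ k ih =>
    intro hv
    -- bad children
    have hcases : ∃ (I U : Finset V) (T : List (Finset V)),
        (∀ c ∈ I, C v c ∧ ¬ Wk C m c) ∧ PWIs G U (m + 2) T ∧
        (∃ Y, T.head? = some Y ∧ v ∈ Y) ∧ Disjoint (I.biUnion (Ds C)) U ∧
        (∀ u ∈ I.biUnion (Ds C), ∀ x ∈ U, G.Adj u x → x = v) ∧
        Ds C v = I.biUnion (Ds C) ∪ U := by
      by_cases hc : ∃ c, C v c ∧ Wk C m c
      · obtain ⟨c, hvc, hc⟩ := hc
        have hlt : N - d c < k := by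
          have := H.rank _ _ hvc
          have := hN c
          omega
        obtain ⟨L, ⟨a1, a2, a3, a4, a5⟩, Y, hY, hcY⟩ := ih _ hlt c rfl (fun h => hv (wk_up hvc h))
        refine ⟨Finset.univ.filter (fun c' => C v c' ∧ c' ≠ c), insert v (Ds C c), {v, c} :: L,
          ?_, ⟨?_, ?_, ?_, ?_, ?_⟩, ⟨{v, c}, by simp, by simp⟩, ?_, ?_, ?_⟩
        · intro c' hc'
          simp only [Finset.mem_filter, Finset.mem_univ, true_and] at hc'
          exact ⟨hc'.1, fun h => hv (wk_succ hc'.1 hvc hc'.2 h hc)⟩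
        · intro X hX
          rcases List.mem_cons.1 hX with rfl | hX
          · intro x hx
            simp only [Finset.mem_insert, Finset.mem_singleton] at hx
            rcases hx with rfl | rfl
            · simp
            · simp [mem_Ds, ReflTransGen.refl]
          · exact (a1 X hX).trans (Finset.subset_insert _ _)
        · intro u hu
          rcases Finset.mem_insert.1 hu with rfl | hu
          · exact ⟨{u, c}, by simp, by simp⟩
          · obtain ⟨X, hX, h⟩ := a2 u hu
            exact ⟨X, by simp [hX], h⟩
        · intro u hu x hx hux
          rcases Finset.mem_insert.1 hu with hu' | hu' <;> rcases Finset.mem_insert.1 hx with hx' | hx'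
          · subst hu'; subst hx'; exact absurd hux (G.loopless.irrefl _)
          · subst hu'
            obtain rfl := H.adj_child hvc hx' hux
            exact ⟨{u, x}, by simp, by simp⟩
          · subst hx'
            obtain rfl := H.adj_child hvc hu' hux.symm
            exact ⟨{x, u}, by simp, by simp⟩
          · obtain ⟨X, hX, h⟩ := a3 u hu' x hx' hux
            exact ⟨X, by simp [hX], h⟩
        · intro X hX
          rcases List.mem_cons.1 hX with rfl | hX
          · exact Finset.card_le_two.trans (by omega)
          · exact a4 X hX
        · refine ⟨a5, ?_⟩
          rintro x hx ⟨Z, hZ, hxZ⟩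
          simp only [Finset.mem_insert, Finset.mem_singleton] at hx
          rcases hx with rfl | rfl
          · exact absurd (a1 Z hZ hxZ) (H.not_mem_child hvc)
          · exact ⟨Y, hY, hcY⟩
        · rw [Finset.disjoint_biUnion_left]
          intro c' hc'
          simp only [Finset.mem_filter, Finset.mem_univ, true_and] at hc'
          rw [Finset.disjoint_insert_right]
          exact ⟨H.not_mem_child hc'.1, H.ds_disj hc'.1 hvc hc'.2⟩
        · intro u hu x hx hux
          obtain ⟨c', hc', hu⟩ := Finset.mem_biUnion.1 hu
          simp only [Finset.mem_filter, Finset.mem_univ, true_and] at hc'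
          rcases Finset.mem_insert.1 hx with hx | hx
          · exact hx
          · exact absurd hux (H.ds_noadj (H.ds_disj hc'.1 hvc hc'.2) u hu x hx)
        · ext x
          simp only [Finset.mem_union, Finset.mem_biUnion, Finset.mem_filter, Finset.mem_univ,
            true_and, Finset.mem_insert, mem_Ds]
          constructor
          · intro h
            rcases ReflTransGen.cases_head h with h | ⟨c', h1, h2⟩
            · exact Or.inr (Or.inl h.symm)
            · by_cases hcc : c' = c
              · subst hcc; exact Or.inr (Or.inr h2)
              · exact Or.inl ⟨c', ⟨h1, hcc⟩, h2⟩
          · rintro (⟨c', ⟨h1, -⟩, h2⟩ | rfl | h)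
            · exact .head h1 h2
            · exact .refl
            · exact .head hvc h
      · push Not at hc
        refine ⟨Finset.univ.filter (fun c => C v c), {v}, [{v}], ?_, ?_, ⟨{v}, by simp, by simp⟩,
          ?_, ?_, ?_⟩
        · intro c h
          simp only [Finset.mem_filter, Finset.mem_univ, true_and] at h
          exact ⟨h, hc c h⟩
        · simp [PWIs, PWConv]
        · rw [Finset.disjoint_biUnion_left]
          intro c' hc'
          simp only [Finset.mem_filter, Finset.mem_univ, true_and] at hc'
          rw [Finset.disjoint_singleton_right]
          exact H.not_mem_child hc'
        · intro u _ x hx _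
          simpa using hx
        · ext x
          simp only [Finset.mem_union, Finset.mem_biUnion, Finset.mem_filter, Finset.mem_univ,
            true_and, Finset.mem_singleton, mem_Ds]
          constructor
          · intro h
            rcases ReflTransGen.cases_head h with h | ⟨c', h1, h2⟩
            · exact Or.inr h.symm
            · exact Or.inl ⟨c', h1, h2⟩
          · rintro (⟨c', h1, h2⟩ | rfl)
            · exact .head h1 h2
            · exact .refl
    obtain ⟨I, U, T, h1, h2, h3, h4, h5, h6⟩ := hcases
    obtain ⟨L, hL⟩ := pwis_biUnion G (m + 1) (Ds C) I
      (fun c hc => by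
        obtain ⟨L, hL, -⟩ := ihm c (h1 c hc).2
        exact ⟨L, hL⟩)
      (fun i hi j hj hij => by
        have := H.ds_disj (h1 i hi).1 (h1 j hj).1 hij
        exact ⟨this, H.ds_noadj this⟩)
    refine ⟨L.map (insert v) ++ T, ?_, ?_⟩
    · rw [h6]
      exact pwis_cone G _ U (m + 1) v L T hL h2 h3 h4 h5
    · cases L with
      | nil => simpa using h3
      | cons X L => exact ⟨insert v X, by simp, by simp⟩

open Classical in
theorem pw_all [Fintype V] (H : PWRoot G C d) (m : ℕ) (h : ∀ v, ¬ Wk C m v) :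
    pathwidth G ≤ m := by
  have hroots : ∀ k v, d v = k → ∃ r, (∀ u, ¬ C u r) ∧ ReflTransGen C r v := by
    intro k
    induction k using Nat.strong_induction_on with
    | _ k ih =>
    intro v hv
    by_cases hp : ∃ u, C u v
    · obtain ⟨u, hu⟩ := hp
      obtain ⟨r, h1, h2⟩ := ih (d u) (by have := H.rank _ _ hu; omega) u rfl
      exact ⟨r, h1, h2.tail hu⟩
    · push Not at hp
      exact ⟨v, hp, .refl⟩
  obtain ⟨L, hL⟩ := pwis_biUnion G (m + 1) (Ds C) (Finset.univ.filter (fun r => ∀ u, ¬ C u r))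
    (fun c _ => by
      obtain ⟨L, hL, -⟩ := H.pw_rec m c (h c)
      exact ⟨L, hL⟩)
    (fun i hi j hj hij => by
      simp only [Finset.mem_filter, Finset.mem_univ, true_and] at hi hj
      have : Disjoint (Ds C i) (Ds C j) := by
        rw [Finset.disjoint_left]
        intro x hx hy
        rcases H.comparable (mem_Ds.1 hx) (mem_Ds.1 hy) with h | h
        · rcases ReflTransGen.cases_tail h with h | ⟨y, -, h⟩
          · exact hij h.symm
          · exact hj _ h
        · rcases ReflTransGen.cases_tail h with h | ⟨y, -, h⟩
          · exact hij h
          · exact hi _ h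
      exact ⟨this, H.ds_noadj this⟩)
  refine pathwidth_le_of_pwis G m L ?_
  convert hL
  symm
  rw [Finset.eq_univ_iff_forall]
  intro v
  obtain ⟨r, h1, h2⟩ := hroots _ v rfl
  exact Finset.mem_biUnion.2 ⟨r, by simpa using h1, mem_Ds.2 h2⟩

/-- A walk down the forest. -/
theorem down_walk (H : PWRoot G C d) {u w : V} (h : ReflTransGen C u w) :
    ∃ p : G.Walk u w, ∀ e ∈ p.edges, ∃ x y, e = s(x, y) ∧ C x y ∧ ReflTransGen C u x ∧
      ReflTransGen C y w := by
  induction h using ReflTransGen.head_induction_on with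
  | refl => exact ⟨.nil, by simp⟩
  | @head a c h1 h2 ih =>
    obtain ⟨p, hp⟩ := ih
    refine ⟨.cons ((H.adj _ _).2 (Or.inl h1)) p, ?_⟩
    intro e he
    rw [SimpleGraph.Walk.edges_cons, List.mem_cons] at he
    rcases he with rfl | he
    · exact ⟨a, c, rfl, h1, .refl, h2⟩
    · obtain ⟨x, y, h3, h4, h5, h6⟩ := hp e he
      exact ⟨x, y, h3, h4, .head h1 h5, h6⟩

theorem path_edges (hG : G.IsAcyclic) {u w : V} (p q : G.Walk u w) (hp : p.IsPath) :
    ∀ e ∈ p.edges, e ∈ q.edges := by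
  classical
  have : p = q.bypass := congrArg Subtype.val (hG.path_unique ⟨p, hp⟩ ⟨_, q.bypass_isPath⟩)
  rw [this]
  exact q.edges_bypass_subset_edges

theorem lower_uniq (H : PWRoot G C d) {x y x' y' : V} (h : C x y) (h' : C x' y')
    (e : s(x, y) = s(x', y')) : y = y' := by
  rcases Sym2.eq_iff.1 e with ⟨-, h⟩ | ⟨rfl, rfl⟩
  · exact h
  · have := H.rank _ _ h
    have := H.rank _ _ h'
    omega

theorem exists_emb (H : PWRoot G C d) (hG : G.IsAcyclic) (h : ℕ) (v : V) (hv : St C h v) :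
    ∃ η : CTVert h → V, IsHomeoEmb (CTgraph h) G η := by
  classical
  have hstep : ∀ (k : ℕ) (u : V), ∃ c x : Bool → V, St C (k + 1) u → c false ≠ c true ∧
      ∀ b, C u (c b) ∧ ReflTransGen C (c b) (x b) ∧ St C k (x b) := by
    intro k u
    by_cases hs : St C (k + 1) u
    · obtain ⟨c, x, h⟩ := hs
      exact ⟨c, x, fun _ => h⟩
    · exact ⟨fun _ => u, fun _ => u, fun h => absurd h hs⟩
  choose c x hcx using hstep
  let f : List Bool → V := fun l => List.rec v (fun b σ r => x (h - σ.length - 1) r b) l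
  have fcons : ∀ b σ, f (b :: σ) = x (h - σ.length - 1) (f σ) b := fun _ _ => rfl
  have hst : ∀ l : List Bool, l.length ≤ h → St C (h - l.length) (f l) := by
    intro l
    induction l with
    | nil => intro _; exact hv
    | cons b σ ih =>
      intro hl
      simp only [List.length_cons] at hl
      have h1 := ih (by omega)
      have h2 : h - σ.length = (h - σ.length - 1) + 1 := by omega
      rw [h2] at h1
      have h3 := ((hcx _ _ h1).2 b).2.2
      rw [fcons, List.length_cons, Nat.sub_add_eq]
      exact h3
  have hch : ∃ c' : List Bool → Bool → V, ∀ σ : List Bool, σ.length < h →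
      c' σ false ≠ c' σ true ∧ ∀ b, C (f σ) (c' σ b) ∧ ReflTransGen C (c' σ b) (f (b :: σ)) := by
    refine ⟨fun σ => c (h - σ.length - 1) (f σ), ?_⟩
    intro σ hσ
    have h1 := hst σ hσ.le
    have h2 : h - σ.length = (h - σ.length - 1) + 1 := by omega
    rw [h2] at h1
    have h3 := hcx _ _ h1
    exact ⟨h3.1, fun b => ⟨(h3.2 b).1, (h3.2 b).2.1⟩⟩
  clear_value f
  obtain ⟨c', hc'⟩ := hch
  have hcne : ∀ σ : List Bool, σ.length < h → ∀ b b', c' σ b = c' σ b' → b = b' := by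
    intro σ hσ b b' hbb
    have := (hc' σ hσ).1
    cases b <;> cases b' <;> simp_all
  have hdesc : ∀ σ b, σ.length < h → ReflTransGen C (f σ) (f (b :: σ)) := fun σ b hσ =>
    .head ((hc' σ hσ).2 b).1 ((hc' σ hσ).2 b).2
  have hrk : ∀ σ b, σ.length < h → d (f σ) < d (f (b :: σ)) := by
    intro σ b hσ
    have h1 := H.rank _ _ ((hc' σ hσ).2 b).1
    have h2 := H.rank_le ((hc' σ hσ).2 b).2
    omega
  have heq : ∀ σ τ : List Bool, ∀ w, σ.length = τ.length → σ.length ≤ h →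
      ReflTransGen C (f σ) w → ReflTransGen C (f τ) w → σ = τ := by
    intro σ
    induction σ with
    | nil => intro τ w hl _ _ _; exact (List.length_eq_zero_iff.1 (by simpa using hl.symm)).symm
    | cons b σ ih =>
      intro τ w hl hle h1 h2
      cases τ with
      | nil => simp at hl
      | cons b' τ =>
        simp only [List.length_cons, Nat.add_right_cancel_iff] at hl hle
        have hσ : σ.length < h := by omega
        have hτ : τ.length < h := by omega
        obtain rfl := ih τ w hl hσ.le ((hdesc σ b hσ).trans h1) ((hdesc τ b' hτ).trans h2)
        have := H.sib ((hc' σ hσ).2 b).1 ((hc' σ hσ).2 b').1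
          (((hc' σ hσ).2 b).2.trans h1) (((hc' σ hσ).2 b').2.trans h2)
        rw [hcne σ hσ b b' this]
  have happ : ∀ α τ : List Bool, (α ++ τ).length ≤ h →
      ReflTransGen C (f τ) (f (α ++ τ)) ∧ d (f τ) + α.length ≤ d (f (α ++ τ)) := by
    intro α τ
    induction α with
    | nil => intro _; exact ⟨.refl, by simp⟩
    | cons b α ih =>
      intro hl
      simp only [List.cons_append, List.length_cons] at hl ⊢
      have h1 := ih (by omega)
      have h2 := hrk (α ++ τ) b (by omega)
      exact ⟨h1.1.trans (hdesc _ b (by omega)), by omega⟩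
  have hinj : ∀ σ τ : List Bool, σ.length ≤ τ.length → τ.length ≤ h → f σ = f τ → σ = τ := by
    intro σ τ hl hle hf
    have e : τ = τ.take (τ.length - σ.length) ++ τ.drop (τ.length - σ.length) :=
      (List.take_append_drop _ _).symm
    have h1 := happ (τ.take (τ.length - σ.length)) (τ.drop (τ.length - σ.length)) (by rw [← e]; exact hle)
    rw [← e] at h1
    have h2 : σ = τ.drop (τ.length - σ.length) := by
      refine heq _ _ (f τ) ?_ (by omega) (by rw [hf]) h1.1
      rw [List.length_drop]; omega
    have h3 := h1.2
    rw [← h2, hf, List.length_take] at h3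
    have h4 : τ.length - σ.length = 0 := by omega
    rw [h4] at h2
    simpa using h2
  refine ⟨fun l => f l.1, ?_, ?_⟩
  · rintro ⟨σ, hσ⟩ ⟨τ, hτ⟩ hf
    simp only at hf
    apply Subtype.ext
    rcases le_total σ.length τ.length with hl | hl
    · exact hinj σ τ hl hτ hf
    · exact (hinj τ σ hl hσ hf.symm).symm
  · -- classification of adjacency
    have hadj : ∀ t t' : CTVert h, (CTgraph h).Adj t t' →
        (∃ b, t'.1 = b :: t.1 ∧ t.1.length < h) ∨ (∃ b, t.1 = b :: t'.1 ∧ t'.1.length < h) := by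
      intro t t' ht
      simp only [CTgraph, SimpleGraph.fromEdgeSet_adj, Set.mem_setOf_eq] at ht
      obtain ⟨⟨b, σ, hσ, he⟩, -⟩ := ht
      rcases Sym2.eq_iff.1 he with ⟨rfl, rfl⟩ | ⟨rfl, rfl⟩
      · exact Or.inl ⟨b, rfl, hσ⟩
      · exact Or.inr ⟨b, rfl, hσ⟩
    have hdown : ∀ (σ : List Bool) (b : Bool) (hσ : σ.length < h)
        (p : G.Walk (f σ) (f (b :: σ))), p.IsPath →
        ∀ e ∈ p.edges, ∃ x y, e = s(x, y) ∧ C x y ∧ ReflTransGen C (c' σ b) y := by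
      intro σ b hσ p hp e he
      obtain ⟨q, hq⟩ := H.down_walk ((hc' σ hσ).2 b).2
      have hC := ((hc' σ hσ).2 b).1
      have := path_edges hG p (.cons ((H.adj _ _).2 (Or.inl hC)) q) hp e he
      rw [SimpleGraph.Walk.edges_cons, List.mem_cons] at this
      rcases this with rfl | he
      · exact ⟨_, _, rfl, hC, .refl⟩
      · obtain ⟨x, y, h3, h4, h5, h6⟩ := hq e he
        exact ⟨x, y, h3, h4, h5.tail h4⟩
    have hup : ∀ (σ : List Bool) (b : Bool) (hσ : σ.length < h)
        (p : G.Walk (f (b :: σ)) (f σ)), p.IsPath →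
        ∀ e ∈ p.edges, ∃ x y, e = s(x, y) ∧ C x y ∧ ReflTransGen C y (f (b :: σ)) := by
      intro σ b hσ p hp e he
      obtain ⟨q, hq⟩ := H.down_walk (hdesc σ b hσ)
      have := path_edges hG p q.reverse hp e he
      rw [SimpleGraph.Walk.edges_reverse, List.mem_reverse] at this
      obtain ⟨x, y, h3, h4, h5, h6⟩ := hq e this
      exact ⟨x, y, h3, h4, h6⟩
    rintro ⟨t, ht⟩ ⟨t₁, ht₁⟩ ⟨t₂, ht₂⟩ ha₁ ha₂ hne p₁ p₂ hp₁ hp₂ e he₁ he₂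
    simp only at p₁ p₂
    have h1 := hadj _ _ ha₁
    have h2 := hadj _ _ ha₂
    simp only at h1 h2
    rcases h1 with ⟨b, rfl, hl⟩ | ⟨b, rfl, hl⟩ <;> rcases h2 with ⟨b', h2, hl'⟩ | ⟨b', h2, hl'⟩
    · subst h2
      obtain ⟨x, y, rfl, h3, h4⟩ := hdown t b hl p₁ hp₁ e he₁
      obtain ⟨x', y', h5, h6, h7⟩ := hdown t b' hl p₂ hp₂ _ he₂
      obtain rfl := H.lower_uniq h3 h6 h5
      have := H.sib ((hc' t hl).2 b).1 ((hc' t hl).2 b').1 h4 h7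
      obtain rfl := hcne t hl b b' this
      exact hne rfl
    · subst h2
      obtain ⟨x, y, rfl, h3, h4⟩ := hdown _ b hl p₁ hp₁ e he₁
      obtain ⟨x', y', h5, h6, h7⟩ := hup t₂ b' hl' p₂ hp₂ _ he₂
      obtain rfl := H.lower_uniq h3 h6 h5
      have h8 := H.rank_le (h4.trans h7)
      have h9 := H.rank _ _ ((hc' _ hl).2 b).1
      omega
    · subst h2
      obtain ⟨x, y, rfl, h3, h4⟩ := hup t₁ b hl p₁ hp₁ e he₁
      obtain ⟨x', y', h5, h6, h7⟩ := hdown _ b' hl' p₂ hp₂ _ he₂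
      obtain rfl := H.lower_uniq h3 h6 h5
      have h8 := H.rank_le (h7.trans h4)
      have h9 := H.rank _ _ ((hc' _ hl').2 b').1
      omega
    · simp only [List.cons.injEq] at h2
      exact hne (Subtype.ext h2.2)

end PWRoot

end PWHelpers

/-- Lemma 4.2. Every forest of path-width at least `a ≥ 1` admits a
homeomorphic embedding of the binary tree `CT_{a-1}`. -/
theorem homeo_emb_CT_of_forest_large_pathwidth (a : ℕ) (ha : 1 ≤ a)
    {V : Type} [Fintype V] (F : SimpleGraph V) (hF : F.IsAcyclic)
    (hpw : a ≤ pathwidth F) :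
    ∃ η : CTVert (a - 1) → V, IsHomeoEmb (CTgraph (a - 1)) F η := by
  obtain ⟨C, d, H⟩ := exists_pwroot F hF
  by_contra hcon
  have := H.pw_all (a - 1) (fun v hv => by
    obtain ⟨u, -, hu⟩ := hv
    exact hcon (H.exists_emb hF (a - 1) u hu))
  omega
end

section
/- Let h be a positive integer, let a and k be nonnegative integers, and let m = (a+2)h + a. Let (T,X) be a tree-decomposition of a graph G and let φ: CT_m ↪ T be a homeomorphic embedding such that |X_t| ≥ k for all t in the span sp(φ). If for every vertex t of CT_m at height l ≤ m − a there exist a descendant t' of t at height l + a and a vertex r on the path in T between φ(t) and φ(t') such that |X_r| = k, then there exists a cascade of height h and size k in (T,X). -/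
/-!
Common definitions: minors, widths, connectivity, the specific graphs
`K4`, `K23`, `C32`, `graphA`, the binary trees `CT_h`, the graphs `𝒫_k`, `𝒬_k`,
the trees `T_h`, homeomorphic embeddings, cascades, and related notions,
following Dang--Thomas, "Minors of two-connected graphs of large path-width".
-/

open SimpleGraph

/-! ### Separation relation -/

/-- `y` separates `x` from `z`: every walk from `x` to `z` meets `y`. -/
def VSep {T : Type} (G : SimpleGraph T) (x y z : T) : Prop :=
  ∀ p : G.Walk x z, y ∈ p.support

theorem start_not_mem_dropUntil {T : Type} [DecidableEq T] {G : SimpleGraph T} {c p x : T}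
    (P : G.Walk c p) (hP : P.IsPath) (hx : x ∈ P.support) (hne : x ≠ c) :
    c ∉ (P.dropUntil x hx).support := by
  intro hc
  have h1 : ((P.takeUntil x hx).append (P.dropUntil x hx)).support.Nodup := by
    rw [Walk.take_spec]; exact hP.support_nodup
  rw [Walk.support_append] at h1
  have h2 := (List.nodup_append.1 h1).2.2
  have h3 : c ∈ (P.dropUntil x hx).support.tail := by
    have := Walk.mem_support_iff (P.dropUntil x hx) |>.1 hc
    rcases this with h | h
    · exact absurd h.symm hne
    · exact h
  exact h2 c (Walk.start_mem_support _) c h3 rfl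

section SepLemmas

variable {T : Type} {G : SimpleGraph T} {x y z w p q : T}

theorem VSep.symm (h : VSep G x y z) : VSep G z y x := fun P => by
  have := h P.reverse
  simpa using this

theorem VSep.left (G : SimpleGraph T) (x z : T) : VSep G x x z := fun P => P.start_mem_support

theorem VSep.right (G : SimpleGraph T) (x z : T) : VSep G x z z := fun P => P.end_mem_support

theorem VSep.eq_of_self (h : VSep G x y x) : y = x := by
  have := h Walk.nil
  simpa using this

theorem VSep.nest_right (h1 : VSep G x w z) (h2 : VSep G w y z) : VSep G x y z := fun P => by
  classical
  exact P.support_dropUntil_subset_support (h1 P) (h2 _)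

theorem VSep.nest_left (h1 : VSep G x y z) (h2 : VSep G x w y) : VSep G x w z :=
  (VSep.nest_right h1.symm h2.symm).symm

/-- there is a walk `w → z` avoiding `y` when `w ≠ y` lies between `y` and `z` -/
theorem VSep.exists_avoid (hG : G.Connected) (h : VSep G y w z) (hne : w ≠ y) :
    ∃ P : G.Walk w z, y ∉ P.support := by
  classical
  obtain ⟨P⟩ := hG.preconnected y z
  exact ⟨(P.toPath : G.Walk y z).dropUntil w (h _),
    start_not_mem_dropUntil _ P.toPath.2 _ hne⟩

theorem VSep.shrink (hG : G.Connected) (h1 : VSep G x y z) (h2 : VSep G y w z) : VSep G x y w := by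
  by_cases hne : w = y
  · subst hne; exact VSep.right _ _ _
  intro P
  obtain ⟨Q, hQ⟩ := h2.exists_avoid hG hne
  have := h1 (P.append Q)
  rw [Walk.mem_support_append_iff] at this
  tauto

theorem VSep.ext_right (hG : G.Connected) (h1 : VSep G x y z) (h2 : VSep G y z w) (hne : y ≠ z) :
    VSep G x y w := by
  intro P
  obtain ⟨Q, hQ⟩ := h2.exists_avoid hG hne.symm
  have := h1 (P.append Q.reverse)
  rw [Walk.mem_support_append_iff] at this
  simp only [Walk.support_reverse, List.mem_reverse] at this
  tauto

theorem VSep.ext_left (hG : G.Connected) (h1 : VSep G x y z) (h2 : VSep G y z w) (hne : y ≠ z) :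
    VSep G x z w :=
  (VSep.ext_right hG h2.symm h1.symm hne.symm).symm

theorem VSep.antisymm (hG : G.Connected) (h1 : VSep G x y z) (h2 : VSep G y x z) : x = y := by
  by_contra hne
  obtain ⟨Q, hQ⟩ := h1.exists_avoid hG (Ne.symm hne)
  exact hQ (h2 Q)

theorem VSep.hull (h1 : VSep G x z y) (h2 : VSep G p x q) : VSep G p z y ∨ VSep G q z y := by
  classical
  by_contra hcon
  push Not at hcon
  obtain ⟨ha, hb⟩ := hcon
  unfold VSep at ha hb
  push Not at ha hb
  obtain ⟨P, hP⟩ := ha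
  obtain ⟨Q, hQ⟩ := hb
  have := h2 (P.append Q.reverse)
  rw [Walk.mem_support_append_iff] at this
  rcases this with h | h
  · exact hP (P.support_dropUntil_subset_support h (h1 _))
  · simp only [Walk.support_reverse, List.mem_reverse] at h
    exact hQ (Q.support_dropUntil_subset_support h (h1 _))

theorem sep_of_path (hG : G.IsTree) (P : G.Walk x z) (hP : P.IsPath) (hy : y ∈ P.support) :
    VSep G x y z := by
  classical
  intro Q
  have := hG.isAcyclic.path_unique ⟨P, hP⟩ Q.toPath
  have h2 : P = (Q.toPath : G.Walk x z) := congrArg Subtype.val this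
  rw [h2] at hy
  exact Q.support_toPath_subset_support hy

theorem sep_of_edge_disjoint (hG : G.IsTree)
    (h : ∀ (p₁ : G.Walk y x) (p₂ : G.Walk y z), p₁.IsPath → p₂.IsPath →
      ∀ e ∈ p₁.edges, e ∉ p₂.edges) : VSep G x y z := by
  obtain ⟨P, hP, -⟩ := hG.existsUnique_path y x
  obtain ⟨Q, hQ, -⟩ := hG.existsUnique_path y z
  have hd := h P Q hP hQ
  have htr : (P.reverse.append Q).IsTrail := by
    rw [Walk.isTrail_def, Walk.edges_append, Walk.edges_reverse]
    refine List.nodup_append.2 ⟨List.nodup_reverse.2 hP.isTrail.edges_nodup,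
      hQ.isTrail.edges_nodup, ?_⟩
    rintro e he f hf rfl
    exact hd e (List.mem_reverse.1 he) hf
  have hp := (hG.isAcyclic.isPath_iff_isTrail _).2 htr
  exact sep_of_path hG _ hp (by rw [Walk.mem_support_append_iff]; right; simp)

theorem edge_disjoint_of_sep (h : VSep G x y z) (P : G.Walk y x) (Q : G.Walk y z)
    (hP : P.IsPath) (hQ : Q.IsPath) : ∀ e ∈ P.edges, e ∉ Q.edges := by
  classical
  have key : ∀ v, v ∈ P.support → v ∈ Q.support → v ≠ y → False := by
    intro v h1 h2 hne
    have := h ((P.dropUntil v h1).reverse.append (Q.dropUntil v h2))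
    rw [Walk.mem_support_append_iff] at this
    simp only [Walk.support_reverse, List.mem_reverse] at this
    rcases this with h3 | h3
    · exact start_not_mem_dropUntil P hP h1 hne h3
    · exact start_not_mem_dropUntil Q hQ h2 hne h3
  intro e
  induction e using Sym2.ind with
  | _ u v =>
    intro he hf
    by_cases hu : u = y
    · have huv : u ≠ v := (P.adj_of_mem_edges he).ne
      exact key v (P.snd_mem_support_of_mem_edges he) (Q.snd_mem_support_of_mem_edges hf)
        (fun h => huv (hu.trans h.symm))
    · exact key u (P.fst_mem_support_of_mem_edges he) (Q.fst_mem_support_of_mem_edges hf) hu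

/-- A locally geodesic map from a connected graph is injective. -/
theorem injective_of_local {A : Type} {H : SimpleGraph A} (hG : G.Connected) (hH : H.Connected)
    (η : A → T) (hne : ∀ a b, H.Adj a b → η a ≠ η b)
    (hloc : ∀ t t₁ t₂, H.Adj t t₁ → H.Adj t t₂ → t₁ ≠ t₂ → VSep G (η t₁) (η t) (η t₂)) :
    Function.Injective η := by
  classical
  have key : ∀ (b c : A) (P : H.Walk b c), P.IsPath → ∀ a (_ : H.Adj a b), a ∉ P.support →
      VSep G (η a) (η b) (η c) := by
    intro b c P
    induction P with
    | nil => intro _ a _ _; exact VSep.right _ _ _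
    | @cons b d c hbd Q ih =>
      intro hP a hab ha
      rw [Walk.cons_isPath_iff] at hP
      have h1 := ih hP.1 b hbd hP.2
      have hda : a ≠ d := by
        rintro rfl
        exact ha (by simp)
      exact VSep.ext_right hG (hloc b a d hab.symm hbd hda) h1 (hne _ _ hbd)
  intro a c hac
  by_contra hn
  obtain ⟨P0⟩ := hH.preconnected a c
  obtain ⟨P, hP⟩ : ∃ P : H.Walk a c, P.IsPath := ⟨_, P0.toPath.2⟩
  cases P with
  | nil => exact hn rfl
  | @cons _ b _ hab Q =>
    rw [Walk.cons_isPath_iff] at hP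
    have := key b c Q hP.1 a hab hP.2
    rw [← hac] at this
    exact hne _ _ hab this.eq_of_self.symm

end SepLemmas

section TG

theorem Tgraph_adj_iff {h : ℕ} (x y : TVert h) : (Tgraph h).Adj x y ↔
    ∃ (l : MVert h) (s : JVert h), (l.1 = s.1 ∨ ∃ b, l.1 = b :: s.1) ∧
      ((x = Sum.inr s ∧ y = Sum.inl l) ∨ (x = Sum.inl l ∧ y = Sum.inr s)) := by
  unfold Tgraph
  rw [fromEdgeSet_adj]
  constructor
  · rintro ⟨⟨σ, hσ, h1 | ⟨b, h1⟩⟩, -⟩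
    · exact ⟨⟨σ, Nat.le_of_succ_le hσ⟩, ⟨σ, hσ⟩, Or.inl rfl, by simpa using h1⟩
    · exact ⟨⟨b :: σ, by simpa using hσ⟩, ⟨σ, hσ⟩, Or.inr ⟨b, rfl⟩, by simpa using h1⟩
  · rintro ⟨⟨l, hl⟩, ⟨s, hs⟩, h1, h2⟩
    refine ⟨⟨s, hs, ?_⟩, ?_⟩
    · rcases h1 with h1 | ⟨b, h1⟩
      · left
        dsimp only at h1
        subst h1
        simpa using h2
      · right
        refine ⟨b, ?_⟩
        dsimp only at h1
        subst h1
        simpa using h2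
    · rcases h2 with ⟨rfl, rfl⟩ | ⟨rfl, rfl⟩ <;> simp

theorem Tgraph_connected (h : ℕ) : (Tgraph h).Connected := by
  have h1 : ∀ (σ : List Bool) (hσ : σ.length ≤ h),
      (Tgraph h).Reachable (Sum.inl ⟨σ, hσ⟩) (Sum.inl ⟨[], Nat.zero_le h⟩) := by
    intro σ
    induction σ with
    | nil => intro _; exact Reachable.refl _
    | cons b σ ih =>
      intro hσ
      have hs : σ.length + 1 ≤ h := by simpa using hσ
      have e1 : (Tgraph h).Adj (Sum.inl ⟨b :: σ, hσ⟩) (Sum.inr ⟨σ, hs⟩) :=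
        (Tgraph_adj_iff _ _).2 ⟨_, _, Or.inr ⟨b, rfl⟩, Or.inr ⟨rfl, rfl⟩⟩
      have e2 : (Tgraph h).Adj (Sum.inr ⟨σ, hs⟩) (Sum.inl ⟨σ, by omega⟩) :=
        (Tgraph_adj_iff _ _).2 ⟨_, _, Or.inl rfl, Or.inl ⟨rfl, rfl⟩⟩
      exact e1.reachable.trans (e2.reachable.trans (ih _))
  have h2 : ∀ x : TVert h, (Tgraph h).Reachable x (Sum.inl ⟨[], Nat.zero_le h⟩) := by
    rintro (⟨σ, hσ⟩ | ⟨σ, hσ⟩)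
    · exact h1 σ hσ
    · have e2 : (Tgraph h).Adj (Sum.inr ⟨σ, hσ⟩) (Sum.inl ⟨σ, by omega⟩) :=
        (Tgraph_adj_iff _ _).2 ⟨_, _, Or.inl rfl, Or.inl ⟨rfl, rfl⟩⟩
      exact e2.reachable.trans (h1 _ _)
  have : Nonempty (TVert h) := ⟨Sum.inl ⟨[], Nat.zero_le h⟩⟩
  exact ⟨fun x y => (h2 x).trans (h2 y).symm⟩

theorem CT_adj {m : ℕ} (b : Bool) (σ : List Bool) (h1 : σ.length ≤ m)
    (h2 : (b :: σ).length ≤ m) : (CTgraph m).Adj ⟨σ, h1⟩ ⟨b :: σ, h2⟩ := by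
  unfold CTgraph
  rw [fromEdgeSet_adj]
  exact ⟨⟨b, σ, by simpa using h2, rfl⟩, by simp⟩

end TG

section FL

variable {T : Type} {G : SimpleGraph T} {m : ℕ} {F : List Bool → T}

theorem F_chain (hG : G.Connected)
    (hinj : ∀ x y : List Bool, x.length ≤ m → y.length ≤ m → F x = F y → x = y)
    (loc1 : ∀ b d y, (b :: d :: y).length ≤ m → VSep G (F y) (F (d :: y)) (F (b :: d :: y)))
    (τ : List Bool) : ∀ (b d : Bool) (y : List Bool), (τ ++ b :: d :: y).length ≤ m →
      VSep G (F y) (F (d :: y)) (F (τ ++ b :: d :: y)) := by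
  induction τ using List.reverseRecOn with
  | nil => intro b d y h; exact loc1 b d y h
  | append_singleton τ c ih =>
    intro b d y h
    have e : τ ++ [c] ++ b :: d :: y = τ ++ c :: b :: d :: y := by simp
    rw [e] at h ⊢
    have h3 := ih c b (d :: y) h
    simp only [List.length_append, List.length_cons] at h
    refine VSep.ext_right hG (loc1 b d y (by simp; omega)) h3 ?_
    intro he
    have := hinj _ _ (by simp; omega) (by simp; omega) he
    simpa using congrArg List.length this

theorem F_line (hG : G.Connected)
    (hinj : ∀ x y : List Bool, x.length ≤ m → y.length ≤ m → F x = F y → x = y)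
    (loc1 : ∀ b d y, (b :: d :: y).length ≤ m → VSep G (F y) (F (d :: y)) (F (b :: d :: y)))
    (x : List Bool) (ρ : List Bool) : ∀ (τ : List Bool), (τ ++ (ρ ++ x)).length ≤ m →
      VSep G (F x) (F (ρ ++ x)) (F (τ ++ (ρ ++ x))) := by
  induction ρ with
  | nil => intro τ _; exact VSep.left _ _ _
  | cons d ρ ih =>
    intro τ h
    induction τ using List.reverseRecOn with
    | nil => exact VSep.right _ _ _
    | append_singleton τ b _ =>
      have e : τ ++ [b] ++ (d :: ρ ++ x) = τ ++ b :: d :: (ρ ++ x) := by simp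
      have e2 : τ ++ [b] ++ (d :: ρ ++ x) = (τ ++ [b] ++ [d]) ++ (ρ ++ x) := by simp
      have h1 := ih (τ ++ [b] ++ [d]) (by rw [← e2]; exact h)
      rw [← e2] at h1
      have h2 := F_chain hG hinj loc1 τ b d (ρ ++ x) (by rw [← e]; exact h)
      rw [← e] at h2
      exact h1.nest_right h2

theorem F_line' (hG : G.Connected)
    (hinj : ∀ x y : List Bool, x.length ≤ m → y.length ≤ m → F x = F y → x = y)
    (loc1 : ∀ b d y, (b :: d :: y).length ≤ m → VSep G (F y) (F (d :: y)) (F (b :: d :: y)))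
    {x y z : List Bool} (h1 : x <:+ y) (h2 : y <:+ z) (hz : z.length ≤ m) :
    VSep G (F x) (F y) (F z) := by
  obtain ⟨ρ, rfl⟩ := h1
  obtain ⟨τ, rfl⟩ := h2
  exact F_line hG hinj loc1 x ρ τ hz

theorem F_branch (hG : G.Connected)
    (hinj : ∀ x y : List Bool, x.length ≤ m → y.length ≤ m → F x = F y → x = y)
    (loc1 : ∀ b d y, (b :: d :: y).length ≤ m → VSep G (F y) (F (d :: y)) (F (b :: d :: y)))
    (loc2 : ∀ y : List Bool, y.length + 1 ≤ m →
      VSep G (F (false :: y)) (F y) (F (true :: y)))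
    {v x z : List Bool} (h1 : (false :: v) <:+ x) (h2 : (true :: v) <:+ z)
    (hx : x.length ≤ m) (hz : z.length ≤ m) : VSep G (F x) (F v) (F z) := by
  have l1 := h1.length_le
  simp only [List.length_cons] at l1
  have hne : ∀ b, F v ≠ F (b :: v) := by
    intro b he
    have := hinj _ _ (by omega) (by simp; omega) he
    simpa using congrArg List.length this
  have a1 := F_line' hG hinj loc1 (List.suffix_cons true v) h2 hz
  have a2 := F_line' hG hinj loc1 (List.suffix_cons false v) h1 hx
  have a3 := VSep.ext_right hG (loc2 v (by omega)) a1 (hne true)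
  exact VSep.ext_left hG a2.symm a3 (hne false).symm

end FL

/-- The vertices of `CT_m` used for the cascade. -/
def cascU (D : List Bool → List Bool) : List Bool → List Bool
  | [] => []
  | b :: σ => b :: false :: D (cascU D σ)

/-- Lemma 4.3. Let `m = (a+2)h + a`, let `(T, X)` be a
tree-decomposition of `G` and `φ : CT_m ↪ T` a homeomorphic embedding with `|X t| ≥ k` on
its span. If every vertex `t` of `CT_m` at height `l ≤ m - a` has a descendant `t'` at
height `l + a` such that some vertex `r` on the path of `T` between `φ t` and `φ t'` has
`|X r| = k`, then there is a cascade of height `h` and size `k` in `(T, X)`. -/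
theorem cascade_of_descendant_condition (h a k : ℕ) (hh : 0 < h) (m : ℕ)
    (hm : m = (a + 2) * h + a)
    {V T : Type} [Fintype V] [Fintype T] (G : SimpleGraph V)
    (Tr : SimpleGraph T) (X : T → Finset V) (hTD : IsTreeDecomp G Tr X)
    (φ : CTVert m → T) (hφ : IsHomeoEmb (CTgraph m) Tr φ)
    (hbig : ∀ t : T, inSpan Tr φ t → k ≤ (X t).card)
    (hdesc : ∀ t : CTVert m, t.1.length ≤ m - a →
      ∃ t' : CTVert m, t.1 <:+ t'.1 ∧ t'.1.length = t.1.length + a ∧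
        ∃ p : Tr.Walk (φ t) (φ t'), p.IsPath ∧ ∃ r ∈ p.support, (X r).card = k) :
    ∃ η : TVert h → T, IsCascade Tr X h k η := by
  classical
  obtain ⟨hT, -⟩ := hTD
  have hG : Tr.Connected := hT.connected
  obtain ⟨φinj, φloc⟩ := hφ
  have hsep : ∀ t t₁ t₂, (CTgraph m).Adj t t₁ → (CTgraph m).Adj t t₂ → t₁ ≠ t₂ →
      VSep Tr (φ t₁) (φ t) (φ t₂) := fun t t₁ t₂ h1 h2 h3 =>
    sep_of_edge_disjoint hT (φloc h1 h2 h3)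
  obtain ⟨F, hF⟩ : ∃ F : List Bool → T, ∀ (l : List Bool) (hl : l.length ≤ m), F l = φ ⟨l, hl⟩ :=
    ⟨fun l => if hl : l.length ≤ m then φ ⟨l, hl⟩ else φ ⟨[], Nat.zero_le m⟩,
      fun l hl => by simp [hl]⟩
  have hinj : ∀ x y : List Bool, x.length ≤ m → y.length ≤ m → F x = F y → x = y := by
    intro x y hx hy he
    rw [hF x hx, hF y hy] at he
    exact congrArg Subtype.val (φinj he)
  have loc1 : ∀ b d y, (b :: d :: y).length ≤ m →
      VSep Tr (F y) (F (d :: y)) (F (b :: d :: y)) := by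
    intro b d y hl
    have hl' := hl
    simp only [List.length_cons] at hl'
    have hd : (d :: y).length ≤ m := by simp; omega
    have hy : y.length ≤ m := by omega
    rw [hF _ hl, hF _ hd, hF _ hy]
    refine hsep _ _ _ (CT_adj d y hy hd).symm (CT_adj b _ hd hl) ?_
    intro he
    have := congrArg (fun t => t.1.length) he
    simp at this
    omega
  have loc2 : ∀ y : List Bool, y.length + 1 ≤ m →
      VSep Tr (F (false :: y)) (F y) (F (true :: y)) := by
    intro y hl
    have hd : ∀ d, (d :: y).length ≤ m := by intro d; simpa using hl
    have hy : y.length ≤ m := by omega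
    rw [hF _ (hd false), hF _ (hd true), hF _ hy]
    refine hsep _ _ _ (CT_adj false y hy (hd _)) (CT_adj true y hy (hd _)) ?_
    intro he
    simp at he
  have hex : ∀ l : List Bool, ∃ (d : List Bool) (r : T), l.length ≤ m - a →
      l <:+ d ∧ d.length = l.length + a ∧ VSep Tr (F l) r (F d) ∧ (X r).card = k := by
    intro l
    by_cases hl : l.length ≤ m - a
    · obtain ⟨⟨d, hd⟩, h1, h2, P, hP, r, hr, hc⟩ := hdesc ⟨l, by omega⟩ hl
      refine ⟨d, r, fun _ => ⟨h1, h2, ?_, hc⟩⟩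
      rw [hF l (by omega), hF d hd]
      exact sep_of_path hT P hP hr
    · exact ⟨[], F [], fun h => absurd h hl⟩
  choose D R hDR using hex
  have hu : ∀ σ : List Bool, σ.length ≤ h → (cascU D σ).length = (a + 2) * σ.length := by
    intro σ
    induction σ with
    | nil => intro _; simp [cascU]
    | cons b σ ih =>
      intro hσ
      simp only [List.length_cons] at hσ
      have h1 := ih (by omega)
      have h2 : (a + 2) * σ.length ≤ (a + 2) * h := Nat.mul_le_mul_left _ (by omega)
      have h3 := (hDR (cascU D σ) (by omega)).2.1
      simp only [cascU, List.length_cons, h3, h1]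
      ring
  have hule : ∀ σ : List Bool, σ.length ≤ h → (cascU D σ).length ≤ m - a := by
    intro σ hσ
    have h2 : (a + 2) * σ.length ≤ (a + 2) * h := Nat.mul_le_mul_left _ hσ
    rw [hu σ hσ]; omega
  have hma : a ≤ m := by omega
  -- abbreviations
  let v : List Bool → List Bool := fun σ => false :: D (cascU D σ)
  have hDle : ∀ σ : List Bool, σ.length ≤ h → (D (cascU D σ)).length ≤ m := by
    intro σ hσ
    have h1 := hule σ hσ
    have := (hDR _ h1).2.1
    omega
  have hvle : ∀ σ : List Bool, σ.length + 1 ≤ h → (v σ).length + 1 ≤ m := by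
    intro σ hσ
    have := hule (true :: σ) (by simpa using hσ)
    simp only [cascU, List.length_cons] at this
    simp only [v, List.length_cons]
    omega
  have hUD : ∀ σ : List Bool, σ.length ≤ h → cascU D σ <:+ D (cascU D σ) := fun σ hσ =>
    (hDR _ (hule σ hσ)).1
  have hvU : ∀ (σ : List Bool) (b : Bool), v σ <:+ cascU D (b :: σ) := fun σ b =>
    List.suffix_cons _ _
  have hDv : ∀ σ : List Bool, D (cascU D σ) <:+ v σ := fun σ => List.suffix_cons _ _
  have hS : ∀ σ : List Bool, σ.length ≤ h →
      VSep Tr (F (cascU D σ)) (R (cascU D σ)) (F (D (cascU D σ))) := fun σ hσ =>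
    (hDR _ (hule σ hσ)).2.2.1
  -- `F v`, `R U_b`, `F D_b`
  have s1 : ∀ (σ : List Bool) (b : Bool), σ.length + 1 ≤ h →
      VSep Tr (F (v σ)) (R (cascU D (b :: σ))) (F (D (cascU D (b :: σ)))) := by
    intro σ b hσ
    have hb : (b :: σ).length ≤ h := by simpa using hσ
    exact (F_line' hG hinj loc1 (hvU σ b) (hUD _ hb) (hDle _ hb)).nest_right (hS _ hb)
  have FDv : ∀ σ : List Bool, σ.length + 1 ≤ h → F (D (cascU D σ)) ≠ F (v σ) := by
    intro σ hσ he
    have := hinj _ _ (hDle _ (by omega)) (by have := hvle σ hσ; omega) he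
    simpa [v] using congrArg List.length this
  -- `R u`, `F v`, `R U_b`
  have s2 : ∀ (σ : List Bool) (b : Bool), σ.length + 1 ≤ h →
      VSep Tr (R (cascU D σ)) (F (v σ)) (R (cascU D (b :: σ))) := by
    intro σ b hσ
    have hb : (b :: σ).length ≤ h := by simpa using hσ
    have hv := hvle σ hσ
    have a1 : VSep Tr (F (cascU D σ)) (F (D (cascU D σ))) (F (v σ)) :=
      F_line' hG hinj loc1 (hUD σ (by omega)) (hDv σ) (by omega)
    have a2 : VSep Tr (R (cascU D σ)) (F (D (cascU D σ))) (F (v σ)) :=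
      (a1.symm.shrink hG (hS σ (by omega)).symm).symm
    have a3 : VSep Tr (F (D (cascU D σ))) (F (v σ)) (F (D (cascU D (b :: σ)))) :=
      F_line' hG hinj loc1 (hDv σ) ((hvU σ b).trans (hUD _ hb)) (hDle _ hb)
    exact (VSep.ext_left hG a2 a3 (FDv σ hσ)).shrink hG (s1 σ b hσ)
  -- `R U_f`, `F v`, `R U_t`
  have s3 : ∀ σ : List Bool, σ.length + 1 ≤ h →
      VSep Tr (R (cascU D (false :: σ))) (F (v σ)) (R (cascU D (true :: σ))) := by
    intro σ hσ
    have hb : ∀ b : Bool, (b :: σ).length ≤ h := by simpa using hσ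
    have a1 : VSep Tr (F (D (cascU D (false :: σ)))) (F (v σ)) (F (D (cascU D (true :: σ)))) :=
      F_branch hG hinj loc1 loc2 (hUD _ (hb false)) (hUD _ (hb true)) (hDle _ (hb _))
        (hDle _ (hb _))
    exact ((a1.shrink hG (s1 σ true hσ)).symm.shrink hG (s1 σ false hσ)).symm
  -- `F v`, `R U_b`, `F v_b`
  have s4 : ∀ (σ : List Bool) (b : Bool), σ.length + 2 ≤ h →
      VSep Tr (F (v σ)) (R (cascU D (b :: σ))) (F (v (b :: σ))) := by
    intro σ b hσ
    have hb : (b :: σ).length + 1 ≤ h := by simp only [List.length_cons]; omega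
    have hv := hvle _ hb
    exact VSep.nest_left (F_line' hG hinj loc1 ((hvU σ b).trans (hUD _ (by omega)))
      (hDv (b :: σ)) (by omega)) (s1 σ b (by omega))
  have n1 : ∀ σ : List Bool, σ.length + 1 ≤ h → R (cascU D σ) ≠ F (v σ) := by
    intro σ hσ he
    have hv := hvle σ hσ
    have a1 : VSep Tr (F (cascU D σ)) (F (D (cascU D σ))) (F (v σ)) :=
      F_line' hG hinj loc1 (hUD σ (by omega)) (hDv σ) (by omega)
    have a2 := hS σ (by omega)
    rw [he] at a2
    exact FDv σ hσ (a2.symm.antisymm hG a1.symm)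
  have n2 : ∀ (σ : List Bool) (b : Bool), σ.length + 1 ≤ h →
      R (cascU D (b :: σ)) ≠ F (v σ) := by
    intro σ b hσ he
    have hb : (b :: σ).length ≤ h := by simpa using hσ
    have hv := hvle σ hσ
    have a1 := F_line' hG hinj loc1 (hvU σ b) (hUD _ hb) (hDle _ hb)
    have a2 := hS _ hb
    rw [he] at a2
    have := hinj _ _ (by omega) (by have := hule _ hb; omega) (a1.antisymm hG a2)
    simpa [v, cascU] using congrArg List.length this
  let η : TVert h → T := Sum.elim (fun l => R (cascU D l.1)) (fun s => F (v s.1))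
  have hne : ∀ x y, (Tgraph h).Adj x y → η x ≠ η y := by
    intro x y hxy
    obtain ⟨⟨l, hl⟩, ⟨s, hs⟩, h1, h2⟩ := (Tgraph_adj_iff x y).1 hxy
    have key : R (cascU D l) ≠ F (v s) := by
      rcases h1 with h1 | ⟨b, h1⟩ <;> dsimp only at h1 <;> subst h1
      · exact n1 _ hs
      · exact n2 _ _ hs
    rcases h2 with ⟨rfl, rfl⟩ | ⟨rfl, rfl⟩
    · exact key.symm
    · exact key
  have hloc : ∀ t t₁ t₂, (Tgraph h).Adj t t₁ → (Tgraph h).Adj t t₂ → t₁ ≠ t₂ →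
      VSep Tr (η t₁) (η t) (η t₂) := by
    intro t t₁ t₂ h1 h2 h12
    obtain ⟨⟨l, hl⟩, ⟨s, hs⟩, c1, d1⟩ := (Tgraph_adj_iff _ _).1 h1
    obtain ⟨⟨l', hl'⟩, ⟨s', hs'⟩, c2, d2⟩ := (Tgraph_adj_iff _ _).1 h2
    dsimp only at c1 c2
    rcases d1 with ⟨rfl, rfl⟩ | ⟨rfl, rfl⟩
    · rcases d2 with ⟨e, rfl⟩ | ⟨e, rfl⟩
      · have e' : s = s' := by simpa using e
        subst e'
        change VSep Tr (R (cascU D l)) (F (v s)) (R (cascU D l'))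
        rcases c1 with rfl | ⟨b, rfl⟩ <;> rcases c2 with rfl | ⟨b', rfl⟩
        · exact absurd rfl h12
        · exact s2 _ _ hs
        · exact (s2 _ _ hs).symm
        · cases b <;> cases b'
          · exact absurd rfl h12
          · exact s3 _ hs
          · exact (s3 _ hs).symm
          · exact absurd rfl h12
      · exact absurd e (by simp)
    · rcases d2 with ⟨e, rfl⟩ | ⟨e, rfl⟩
      · exact absurd e (by simp)
      · have e' : l = l' := by simpa using e
        subst e'
        change VSep Tr (F (v s)) (R (cascU D l)) (F (v s'))
        rcases c1 with rfl | ⟨b, rfl⟩ <;> rcases c2 with rfl | ⟨b', c2⟩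
        · exact absurd rfl h12
        · subst c2
          exact (s4 _ _ (by simp only [List.length_cons] at hs; omega)).symm
        · exact s4 _ _ (by simp only [List.length_cons] at hs'; omega)
        · have : s = s' := by simpa using (List.cons.inj c2).2
          subst this
          exact absurd rfl h12
  have hspan : ∀ x : TVert h, ∃ c d : CTVert m, VSep Tr (φ c) (η x) (φ d) := by
    rintro (⟨l, hl⟩ | ⟨s, hs⟩)
    · have h1 := hS l hl
      have hl1 : (cascU D l).length ≤ m := by have := hule l hl; omega
      rw [hF _ hl1, hF _ (hDle l hl)] at h1
      exact ⟨_, _, h1⟩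
    · have hv := hvle s hs
      refine ⟨⟨v s, by omega⟩, ⟨v s, by omega⟩, ?_⟩
      rw [← hF (v s) (by omega)]
      exact VSep.left _ _ _
  refine ⟨η, ⟨injective_of_local hG (Tgraph_connected h) η hne hloc, ?_⟩, ?_, ?_⟩
  · intro t t₁ t₂ h1 h2 h12 p₁ p₂ hp₁ hp₂
    exact edge_disjoint_of_sep (hloc t t₁ t₂ h1 h2 h12) p₁ p₂ hp₁ hp₂
  · rintro ⟨l, hl⟩
    exact (hDR _ (hule l hl)).2.2.2
  · rintro t ⟨x, y, P, hP, ht⟩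
    have h0 := sep_of_path hT P hP ht
    obtain ⟨c, d, h1⟩ := hspan x
    obtain ⟨c', d', h2⟩ := hspan y
    obtain ⟨e, he⟩ : ∃ e, VSep Tr (φ e) t (η y) := by
      rcases h0.hull h1 with h | h
      · exact ⟨_, h⟩
      · exact ⟨_, h⟩
    obtain ⟨f, hf⟩ : ∃ f, VSep Tr (φ f) t (φ e) := by
      rcases he.symm.hull h2 with h | h
      · exact ⟨_, h⟩
      · exact ⟨_, h⟩
    obtain ⟨Q, hQ, -⟩ := hT.existsUnique_path (φ f) (φ e)
    exact hbig t ⟨f, e, Q, hQ, hf Q⟩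
end

section
/- For any two positive integers h and w, there exists a positive integer p = p(h,w) such that if G is a graph of path-width at least p, then in any tree-decomposition of G of width less than w there exists a cascade of height h (of some size). -/
/-!
Common definitions: minors, widths, connectivity, the specific graphs
`K4`, `K23`, `C32`, `graphA`, the binary trees `CT_h`, the graphs `𝒫_k`, `𝒬_k`,
the trees `T_h`, homeomorphic embeddings, cascades, and related notions,
following Dang--Thomas, "Minors of two-connected graphs of large path-width".
-/

open SimpleGraph

namespace CascadeProof

/-- A rooted tree given by a parent map and a depth function. -/
structure RT (T : Type) where
  r : T
  par : T → T
  d : T → ℕ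
  hd : ∀ x, x ≠ r → d x = d (par x) + 1

/-- `Anc R v a`: `v` is an ancestor of `a` (or equal). -/
inductive Anc {T : Type} (R : RT T) (v : T) : T → Prop
  | refl : Anc R v v
  | step (a : T) : a ≠ R.r → Anc R v (R.par a) → Anc R v a

section anc
variable {T : Type} {R : RT T}

lemma Anc.trans {a b c : T} (h1 : Anc R a b) (h2 : Anc R b c) : Anc R a c := by
  induction h2 with
  | refl => exact h1
  | step x hx _ ih => exact Anc.step x hx ih

lemma Anc.le {a b : T} (h : Anc R a b) : R.d a ≤ R.d b := by
  induction h with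
  | refl => exact le_rfl
  | step x hx _ ih => have := R.hd x hx; omega

lemma Anc.eq_of {a b : T} (h : Anc R a b) (hd : R.d b ≤ R.d a) : a = b := by
  cases h with
  | refl => rfl
  | step _ hx h => have := R.hd b hx; have := h.le; omega

lemma Anc.antisymm {a b : T} (h : Anc R a b) (h' : Anc R b a) : a = b := h.eq_of h'.le

lemma Anc.of_ne {a b : T} (h : Anc R a b) (hne : b ≠ a) : b ≠ R.r ∧ Anc R a (R.par b) := by
  cases h with
  | refl => exact absurd rfl hne
  | step _ hx h => exact ⟨hx, h⟩

lemma Anc.lt {a b : T} (h : Anc R a b) (hne : b ≠ a) : R.d a < R.d b := by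
  obtain ⟨h1, h2⟩ := h.of_ne hne
  have := R.hd b h1; have := h2.le; omega

lemma Anc.par {b : T} (h : b ≠ R.r) : Anc R (R.par b) b := Anc.step b h Anc.refl

lemma Anc.total {a b c : T} (h1 : Anc R a c) (h2 : Anc R b c) : Anc R a b ∨ Anc R b a := by
  induction h1 with
  | refl => exact Or.inr h2
  | step x hx h ih =>
    by_cases e : x = b
    · subst e; exact Or.inl (Anc.step x hx h)
    · exact ih (h2.of_ne e).2

lemma Anc.comp {a b c : T} (h1 : Anc R a c) (h2 : Anc R b c) (hd : R.d a ≤ R.d b) : Anc R a b := by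
  rcases h1.total h2 with h | h
  · exact h
  · rw [h.eq_of hd]; exact Anc.refl

lemma anc_root (a : T) : Anc R R.r a := by
  induction h : R.d a using Nat.strong_induction_on generalizing a with
  | _ n ih =>
    by_cases e : a = R.r
    · rw [e]; exact Anc.refl
    · exact Anc.step a e (ih _ (by have := R.hd a e; omega) _ rfl)

/-- two distinct children of the same vertex have disjoint subtrees -/
lemma child_disj {c c' x : T} (hc : c ≠ R.r) (hc' : c' ≠ R.r) (hp : R.par c = R.par c')
    (h : Anc R c x) (h' : Anc R c' x) : c = c' := by
  have e1 := R.hd c hc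
  have e2 := R.hd c' hc'
  exact (h.comp h' (by rw [e1, e2, hp])).eq_of (by rw [e1, e2, hp])

lemma exists_anc_depth {a b : T} (h : Anc R a b) (i : ℕ) (h1 : R.d a ≤ i) (h2 : i ≤ R.d b) :
    ∃ u, Anc R a u ∧ Anc R u b ∧ R.d u = i := by
  induction h with
  | refl => exact ⟨a, Anc.refl, Anc.refl, by omega⟩
  | step x hx h ih =>
    have := R.hd x hx
    by_cases e : i = R.d x
    · exact ⟨x, Anc.step x hx h, Anc.refl, e.symm⟩
    · obtain ⟨u, hu1, hu2, hu3⟩ := ih (by omega)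
      exact ⟨u, hu1, hu2.trans (Anc.par hx), hu3⟩

end anc

section width
variable {T V : Type} [Fintype T] [Fintype V]

open Classical in
/-- The bag at position `i` of the ordering `f` of `D`. -/
noncomputable def bag (X : T → Finset V) (D : Set T) (f : T → ℕ) (i : ℕ) : Finset V :=
  Finset.univ.filter (fun x => ∃ a ∈ D, ∃ b ∈ D, f a ≤ i ∧ i ≤ f b ∧ x ∈ X a ∧ x ∈ X b)

lemma mem_bag {X : T → Finset V} {D : Set T} {f : T → ℕ} {i : ℕ} {x : V} :
    x ∈ bag X D f i ↔ ∃ a ∈ D, ∃ b ∈ D, f a ≤ i ∧ i ≤ f b ∧ x ∈ X a ∧ x ∈ X b := by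
  simp [bag]

/-- `D` has a linear layout of width at most `p`. -/
def HasW (X : T → Finset V) (D : Set T) (p : ℕ) : Prop :=
  ∃ f : T → ℕ, Set.InjOn f D ∧ ∀ i, (bag X D f i).card ≤ p

lemma HasW.mono {X : T → Finset V} {D D' : Set T} {p q : ℕ} (h : HasW X D p) (hD : D' ⊆ D)
    (hp : p ≤ q) : HasW X D' q := by
  obtain ⟨f, hf, hb⟩ := h
  refine ⟨f, hf.mono hD, fun i => le_trans (Finset.card_le_card ?_) ((hb i).trans hp)⟩
  intro x hx
  rw [mem_bag] at hx ⊢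
  obtain ⟨a, ha, b, hb, h⟩ := hx
  exact ⟨a, hD ha, b, hD hb, h⟩

lemma exists_inj (T : Type) [Fintype T] : ∃ f : T → ℕ, Function.Injective f :=
  ⟨fun t => (Fintype.equivFin T t : ℕ), fun a b h => (Fintype.equivFin T).injective (Fin.ext h)⟩

/-- If all bags of distinct elements of `D` share only elements of `Y`. -/
lemma HasW.of_small {X : T → Finset V} {D : Set T} {w : ℕ} (hX : ∀ t, (X t).card ≤ w)
    (Y : Finset V) (h : ∀ a ∈ D, ∀ b ∈ D, a ≠ b → ∀ x, x ∈ X a → x ∈ X b → x ∈ Y) :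
    HasW X D (Y.card + w) := by
  classical
  obtain ⟨f, hf⟩ := exists_inj T
  refine ⟨f, hf.injOn, fun i => ?_⟩
  by_cases hi : ∃ t, f t = i
  · obtain ⟨t, rfl⟩ := hi
    refine le_trans (Finset.card_le_card (t := Y ∪ X t) ?_)
      ((Finset.card_union_le _ _).trans (by have := hX t; omega))
    intro x hx
    rw [mem_bag] at hx
    obtain ⟨a, ha, b, hb, h1, h2, h3, h4⟩ := hx
    by_cases e : a = b
    · subst e
      rw [← hf (le_antisymm h1 h2)]
      exact Finset.mem_union_right _ h3
    · exact Finset.mem_union_left _ (h a ha b hb e x h3 h4)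
  · refine le_trans (Finset.card_le_card (t := Y) ?_) (by omega)
    intro x hx
    rw [mem_bag] at hx
    obtain ⟨a, ha, b, hb, h1, h2, h3, h4⟩ := hx
    by_cases e : a = b
    · subst e
      exact absurd ⟨a, le_antisymm h1 h2⟩ hi
    · exact h a ha b hb e x h3 h4

lemma HasW.subst {X : T → Finset V} {D S : Set T} {p q : ℕ} (β : T → T)
    (hβ : ∀ a ∈ D, β a ∈ S) (hS : HasW X S p) (hq : ∀ u ∈ S, HasW X {a | a ∈ D ∧ β a = u} q)
    (hsep : ∀ a ∈ D, ∀ b ∈ D, β a ≠ β b → ∀ x, x ∈ X a → x ∈ X b → x ∈ X (β a)) :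
    HasW X D (p + q) := by
  classical
  obtain ⟨f0, hf0, hb0⟩ := hS
  choose! g hg hgb using hq
  obtain ⟨N, hN⟩ : ∃ N : ℕ, ∀ u t, g u t < N := by
    refine ⟨(Finset.univ.sup fun ut : T × T => g ut.1 ut.2) + 1, fun u t => ?_⟩
    have := Finset.le_sup (f := fun ut : T × T => g ut.1 ut.2) (Finset.mem_univ (u, t))
    simp only at this
    omega
  have key : ∀ a i, N * f0 (β a) + g (β a) a ≤ i → f0 (β a) ≤ i / N := by
    intro a i h
    have hNp : 0 < N := lt_of_le_of_lt (Nat.zero_le _) (hN a a)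
    rw [Nat.le_div_iff_mul_le hNp, mul_comm]
    omega
  have key2 : ∀ a i, i ≤ N * f0 (β a) + g (β a) a → i / N ≤ f0 (β a) := by
    intro a i h
    have hNp : 0 < N := lt_of_le_of_lt (Nat.zero_le _) (hN a a)
    have := hN (β a) a
    rw [← Nat.lt_succ_iff, Nat.div_lt_iff_lt_mul hNp, Nat.succ_mul, mul_comm]
    omega
  refine ⟨fun a => N * f0 (β a) + g (β a) a, ?_, fun i => ?_⟩
  · intro a ha b hb h
    simp only at h
    have e : f0 (β a) = f0 (β b) := by
      have h1 := key a _ h.le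
      have h2 := key2 b _ le_rfl
      have h3 := key b _ h.ge
      have h4 := key2 a _ le_rfl
      omega
    have e2 := hf0 (hβ a ha) (hβ b hb) e
    refine hg (β a) (hβ a ha) ⟨ha, rfl⟩ ⟨hb, e2.symm⟩ ?_
    rw [e2] at h ⊢
    omega
  · by_cases hi : ∃ u ∈ S, f0 u = i / N
    · obtain ⟨u, hu, hui⟩ := hi
      refine le_trans (Finset.card_le_card
        (t := bag X S f0 (i / N) ∪ bag X {a | a ∈ D ∧ β a = u} (g u) (i % N)) ?_)
        ((Finset.card_union_le _ _).trans (add_le_add (hb0 _) (hgb u hu _)))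
      intro x hx
      rw [mem_bag] at hx
      obtain ⟨a, ha, b, hb, h1, h2, h3, h4⟩ := hx
      have k1 := key a _ h1
      have k2 := key2 b _ h2
      rw [Finset.mem_union, mem_bag, mem_bag]
      by_cases e : β a = β b
      · right
        have e1 : f0 (β a) = i / N := le_antisymm k1 (e ▸ k2)
        have e2 : β a = u := hf0 (hβ a ha) hu (e1.trans hui.symm)
        have e3 : β b = u := e ▸ e2
        have hm := Nat.div_add_mod i N
        simp only [e2, e3, hui] at h1 h2
        exact ⟨a, ⟨ha, e2⟩, b, ⟨hb, e3⟩, by omega, by omega, h3, h4⟩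
      · left
        exact ⟨β a, hβ a ha, β b, hβ b hb, k1, k2, hsep a ha b hb e x h3 h4,
          hsep b hb a ha (Ne.symm e) x h4 h3⟩
    · refine le_trans (Finset.card_le_card (t := bag X S f0 (i / N)) ?_)
        ((hb0 _).trans (Nat.le_add_right _ _))
      intro x hx
      rw [mem_bag] at hx
      obtain ⟨a, ha, b, hb, h1, h2, h3, h4⟩ := hx
      have k1 := key a _ h1
      have k2 := key2 b _ h2
      rw [mem_bag]
      by_cases e : β a = β b
      · exact absurd ⟨β a, hβ a ha, le_antisymm k1 (e ▸ k2)⟩ hi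
      · exact ⟨β a, hβ a ha, β b, hβ b hb, k1, k2, hsep a ha b hb e x h3 h4,
          hsep b hb a ha (Ne.symm e) x h4 h3⟩

/-- Separation property of a rooted tree-decomposition. -/
def Sep (R : RT T) (X : T → Finset V) : Prop :=
  ∀ c a b, Anc R c a → ¬ Anc R c b → ∀ x, x ∈ X a → x ∈ X b → x ∈ X c ∧ x ∈ X (R.par c)

variable {R : RT T} {X : T → Finset V} {w : ℕ}

lemma star (hX : ∀ t, (X t).card ≤ w) (hs : Sep R X) {D S : Set T} {v : T} {p q : ℕ}
    (hSD : S ⊆ D) (hv : v ∈ S) (hD : ∀ a ∈ D, a = v ∨ (a ≠ R.r ∧ R.par a ∈ D))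
    (hup : ∀ a ∈ S, ∀ c ∈ D, Anc R c a → c ∈ S)
    (hS : HasW X S p)
    (hq : ∀ c ∈ D, c ∉ S → c ≠ R.r → R.par c ∈ S → HasW X {a | a ∈ D ∧ Anc R c a} q) :
    HasW X D (p + q + 3 * w) := by
  classical
  have hex : ∀ a ∈ D, a ∉ S → ∃ c, c ∈ D ∧ c ∉ S ∧ c ≠ R.r ∧ R.par c ∈ S ∧ Anc R c a := by
    intro a
    induction h : R.d a using Nat.strong_induction_on generalizing a with
    | _ n ih =>
      intro ha haS
      rcases hD a ha with rfl | ⟨h1, h2⟩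
      · exact absurd hv haS
      · by_cases hp : R.par a ∈ S
        · exact ⟨a, ha, haS, h1, hp, Anc.refl⟩
        · obtain ⟨c, c1, c2, c3, c4, c5⟩ :=
            ih (R.d (R.par a)) (by have := R.hd a h1; omega) _ rfl h2 hp
          exact ⟨c, c1, c2, c3, c4, c5.trans (Anc.par h1)⟩
  have huniq : ∀ b c c', c ∈ D → c ∉ S → c ≠ R.r → R.par c ∈ S → c' ∈ D → c' ∉ S → c' ≠ R.r →
      R.par c' ∈ S → Anc R c b → Anc R c' b → c = c' := by
    intro b c c' h1 h2 h3 h4 h1' h2' h3' h4' hb hb'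
    by_contra hne
    rcases hb.total hb' with h | h
    · exact h2 (hup _ h4' c h1 (h.of_ne (Ne.symm hne)).2)
    · exact h2' (hup _ h4 c' h1' (h.of_ne hne).2)
  choose! γ g1 g2 g3 g4 g5 using hex
  -- the set S'' 
  set S2 : Set T := S ∪ {c | c ∈ D ∧ c ∉ S ∧ c ≠ R.r ∧ R.par c ∈ S} with hS2
  have hW2 : HasW X S2 (p + 2 * w) := by
    refine HasW.subst (S := S) (fun c => if c ∈ S then c else R.par c) ?_ hS ?_ ?_
    · rintro a (ha | ha)
      · simp [ha]
      · simp [ha.2.1, ha.2.2.2]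
    · intro u hu
      refine (HasW.of_small hX (X u) ?_).mono (q := 2 * w) le_rfl (by have := hX u; omega)
      rintro a ⟨ha, hau⟩ b ⟨hb, hbu⟩ hab x hxa hxb
      by_cases haS : a ∈ S
      · rw [if_pos haS] at hau; rw [← hau]; exact hxa
      by_cases hbS : b ∈ S
      · rw [if_pos hbS] at hbu; rw [← hbu]; exact hxb
      rw [if_neg haS] at hau
      rw [if_neg hbS] at hbu
      rcases ha with ha | ha
      · exact absurd ha haS
      rcases hb with hb | hb
      · exact absurd hb hbS
      have : ¬ Anc R a b := fun h =>
        hab (child_disj ha.2.2.1 hb.2.2.1 (hau.trans hbu.symm) h Anc.refl)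
      rw [← hau]
      exact (hs a a b Anc.refl this x hxa hxb).2
    · intro a ha b hb hab x hxa hxb
      by_cases haS : a ∈ S
      · rw [if_pos haS]; exact hxa
      rw [if_neg haS] at hab ⊢
      rcases ha with ha | ha
      · exact absurd ha haS
      refine (hs a a b Anc.refl (fun h => ?_) x hxa hxb).2
      by_cases hbS : b ∈ S
      · exact haS (hup b hbS a ha.1 h)
      · rcases hb with hb | hb
        · exact hbS hb
        have e := huniq b a b ha.1 ha.2.1 ha.2.2.1 ha.2.2.2 hb.1 hb.2.1 hb.2.2.1 hb.2.2.2 h Anc.refl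
        subst e
        rw [if_neg haS] at hab
        exact hab rfl
  have := HasW.subst (D := D) (S := S2) (q := q + w) (fun a => if a ∈ S then a else γ a)
    ?_ hW2 ?_ ?_
  · exact this.mono le_rfl (by omega)
  · intro a ha
    by_cases haS : a ∈ S
    · simp only [if_pos haS]; exact Or.inl haS
    · simp only [if_neg haS]
      exact Or.inr ⟨g1 a ha haS, g2 a ha haS, g3 a ha haS, g4 a ha haS⟩
  · intro u hu
    by_cases huS : u ∈ S
    · refine (HasW.of_small (D := {u}) hX ∅ ?_).mono (q := q + w) ?_ (by simp)
      · rintro a rfl b rfl h; exact absurd rfl h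
      · rintro a ⟨ha, hau⟩
        by_cases haS : a ∈ S
        · simpa [haS] using hau
        · rw [if_neg haS] at hau
          exact absurd (hau ▸ huS) (g2 a ha haS)
    · rcases hu with hu | hu
      · exact absurd hu huS
      refine (hq u hu.1 hu.2.1 hu.2.2.1 hu.2.2.2).mono ?_ (by omega)
      rintro a ⟨ha, hau⟩
      by_cases haS : a ∈ S
      · rw [if_pos haS] at hau
        exact absurd (hau ▸ haS) huS
      · rw [if_neg haS] at hau
        exact ⟨ha, hau ▸ g5 a ha haS⟩
  · intro a ha b hb hab x hxa hxb
    by_cases haS : a ∈ S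
    · rw [if_pos haS]; exact hxa
    rw [if_neg haS] at hab ⊢
    refine (hs (γ a) a b (g5 a ha haS) (fun h => ?_) x hxa hxb).1
    by_cases hbS : b ∈ S
    · exact g2 a ha haS (hup b hbS _ (g1 a ha haS) h)
    · rw [if_neg hbS] at hab
      exact hab (huniq b _ _ (g1 a ha haS) (g2 a ha haS) (g3 a ha haS) (g4 a ha haS)
        (g1 b hb hbS) (g2 b hb hbS) (g3 b hb hbS) (g4 b hb hbS) h (g5 b hb hbS))

end width

section rank
variable {T V : Type} [Fintype T] [Fintype V]
variable {R : RT T} {X : T → Finset V} {w : ℕ}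

/-- The region below `v` reachable through bags of size at least `s`. -/
def Reg (R : RT T) (X : T → Finset V) (s : ℕ) (v a : T) : Prop :=
  Anc R v a ∧ ∀ x, Anc R v x → Anc R x a → s ≤ (X x).card

lemma Reg.self {s : ℕ} {v : T} (h : s ≤ (X v).card) : Reg R X s v v :=
  ⟨Anc.refl, fun x h1 h2 => by rw [h2.antisymm h1]; exact h⟩

lemma Reg.card {s : ℕ} {v a : T} (h : Reg R X s v a) : s ≤ (X a).card := h.2 a h.1 Anc.refl

lemma Reg.card' {s : ℕ} {v a : T} (h : Reg R X s v a) : s ≤ (X v).card := h.2 v Anc.refl h.1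

lemma Reg.step {s : ℕ} {v a : T} (h : Reg R X s v (R.par a)) (ha : a ≠ R.r)
    (hc : s ≤ (X a).card) : Reg R X s v a := by
  refine ⟨Anc.step a ha h.1, fun x h1 h2 => ?_⟩
  by_cases e : a = x
  · rw [← e]; exact hc
  · exact h.2 x h1 (h2.of_ne e).2

lemma Reg.trans {s : ℕ} {a b c : T} (h1 : Reg R X s a b) (h2 : Reg R X s b c) :
    Reg R X s a c := by
  refine ⟨h1.1.trans h2.1, fun x hx hxc => ?_⟩
  rcases hxc.total h2.1 with h | h
  · exact h1.2 x hx h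
  · exact h2.2 x h hxc

lemma Reg.left {s : ℕ} {a b c : T} (h : Reg R X s a c) (h1 : Anc R a b) (h2 : Anc R b c) :
    Reg R X s a b := ⟨h1, fun x hx hxb => h.2 x hx (hxb.trans h2)⟩

lemma Reg.right {s : ℕ} {a b c : T} (h : Reg R X s a c) (h1 : Anc R a b) (h2 : Anc R b c) :
    Reg R X s b c := ⟨h2, fun x hx hxc => h.2 x (h1.trans hx) hxc⟩

lemma Reg.anti {s t : ℕ} (hst : s ≤ t) {a b : T} (h : Reg R X t a b) : Reg R X s a b :=
  ⟨h.1, fun x h1 h2 => hst.trans (h.2 x h1 h2)⟩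

lemma Reg.par {s : ℕ} {v a : T} (h : Reg R X s v a) : a = v ∨ (a ≠ R.r ∧ Reg R X s v (R.par a)) := by
  by_cases e : a = v
  · exact Or.inl e
  · obtain ⟨h1, h2⟩ := h.1.of_ne e
    exact Or.inr ⟨h1, h.left h2 (Anc.par h1)⟩

/-- Cascades of height `k` and size `s` below `v`. -/
def Bk (R : RT T) (X : T → Finset V) (s : ℕ) : ℕ → T → Prop
  | 0, v => ∃ z, Reg R X s v z ∧ (X z).card = s
  | k + 1, v => ∃ z m c₁ c₂, Reg R X s v z ∧ (X z).card = s ∧ Reg R X s z m ∧ m ≠ z ∧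
      c₁ ≠ c₂ ∧ c₁ ≠ R.r ∧ c₂ ≠ R.r ∧ R.par c₁ = m ∧ R.par c₂ = m ∧
      Bk R X s k c₁ ∧ Bk R X s k c₂

lemma Bk.up {s k : ℕ} {u v : T} (h : Bk R X s k u) (hr : Reg R X s v u) : Bk R X s k v := by
  cases k with
  | zero => obtain ⟨z, h1, h2⟩ := h; exact ⟨z, hr.trans h1, h2⟩
  | succ k => obtain ⟨z, m, c1, c2, h1, h2⟩ := h; exact ⟨z, m, c1, c2, hr.trans h1, h2⟩

lemma hasW_empty (X : T → Finset V) (p : ℕ) : HasW X ∅ p :=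
  ⟨fun _ => 0, by simp, fun i => by
    have : bag X ∅ (fun _ => 0) i = ∅ := by
      ext x; rw [mem_bag]; simp
    rw [this]; simp⟩

lemma hasW_singleton (hX : ∀ t, (X t).card ≤ w) (z : T) : HasW X {z} w := by
  refine (HasW.of_small (D := {z}) hX ∅ ?_).mono le_rfl (by simp)
  rintro a rfl b rfl h; exact absurd rfl h

/-- The chain lemma. -/
lemma hasW_chain (hX : ∀ t, (X t).card ≤ w) (hs : Sep R X) {U : Set T} {c : T}
    (hc : ∀ a ∈ U, Anc R c a) (hup : ∀ a ∈ U, ∀ x, Anc R c x → Anc R x a → x ∈ U)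
    (huniq : ∀ a ∈ U, ∀ b ∈ U, a ≠ R.r → b ≠ R.r → R.par a = R.par b → R.par a ∈ U → a = b) :
    HasW X U w := by
  have chain : ∀ a ∈ U, ∀ b ∈ U, R.d a ≤ R.d b → Anc R a b := by
    intro a ha b
    induction h : R.d b using Nat.strong_induction_on generalizing a b with
    | _ n ih =>
      intro hb hab
      by_cases e : b = c
      · subst e
        rw [(hc a ha).eq_of (by omega)]; exact Anc.refl
      obtain ⟨h1, h2⟩ := (hc b hb).of_ne e
      have hbd := R.hd b h1
      have hpb : R.par b ∈ U := hup b hb _ h2 (Anc.par h1)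
      by_cases hle : R.d a ≤ R.d (R.par b)
      · exact (ih _ (by omega) a ha _ rfl hpb hle).trans (Anc.par h1)
      · have hca := h2.le
        have e' : a ≠ c := by rintro rfl; omega
        obtain ⟨h1', h2'⟩ := (hc a ha).of_ne e'
        have had := R.hd a h1'
        have hpa : R.par a ∈ U := hup a ha _ h2' (Anc.par h1')
        have := ih _ (by omega) _ hpa _ rfl hpb (by omega)
        have := this.eq_of (by omega)
        rw [huniq a ha b hb h1' h1 this hpa]; exact Anc.refl
  refine ⟨R.d, fun a ha b hb h => (chain a ha b hb h.le).eq_of h.ge, fun i => ?_⟩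
  by_cases hne : (bag X U R.d i).Nonempty
  · obtain ⟨x, hx⟩ := hne
    rw [mem_bag] at hx
    obtain ⟨a, ha, b, hb, h1, h2, -, -⟩ := hx
    obtain ⟨u, u1, u2, u3⟩ := exists_anc_depth (chain a ha b hb (h1.trans h2)) i h1 h2
    have hu : u ∈ U := hup b hb u ((hc a ha).trans u1) u2
    refine le_trans (Finset.card_le_card ?_) (hX u)
    intro y hy
    rw [mem_bag] at hy
    obtain ⟨a', ha', b', hb', k1, k2, k3, k4⟩ := hy
    have j1 := chain a' ha' u hu (by omega)
    have j2 := chain u hu b' hb' (by omega)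
    by_cases e : a' = u
    · rw [← e]; exact k3
    · exact (hs u b' a' j2 (fun h => e (j1.antisymm h)) y k4 k3).1
  · rw [Finset.not_nonempty_iff_eq_empty] at hne
    rw [hne]; simp

/-- width bound -/
def Fb (w p : ℕ) : ℕ → ℕ
  | 0 => p
  | k + 1 => p + Fb w p k + 11 * w

lemma rank_bound (hX : ∀ t, (X t).card ≤ w) (hs : Sep R X) {s p : ℕ}
    (hp : ∀ v, HasW X {a | Reg R X (s + 1) v a} p) (k : ℕ) :
    ∀ v, ¬ Bk R X s k v → HasW X {a | Reg R X s v a} (Fb w p k) := by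
  induction k with
  | zero =>
    intro v hv
    refine (hp v).mono ?_ le_rfl
    intro a ha
    refine ⟨ha.1, fun x h1 h2 => ?_⟩
    have h3 := ha.2 x h1 h2
    by_contra hcon
    exact hv ⟨x, ha.left h1 h2, by omega⟩
  | succ k ih =>
    intro v hv
    have hinter : ∀ c c', Reg R X s c c' → {a | a ∈ {a | Reg R X s c a} ∧ Anc R c' a} ⊆
        {a | Reg R X s c' a} := by
      rintro c c' h a ⟨h1, h2⟩
      exact Reg.right h1 h.1 h2
    -- children of Z-vertices
    have hz : ∀ z, Reg R X s v z → (X z).card = s →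
        HasW X {a | Reg R X s z a} (Fb w p k + 8 * w) := by
      intro z hvz hzc
      have hchild : ∀ c, c ≠ R.r → R.par c = z → Reg R X s z c →
          HasW X {a | Reg R X s c a} (Fb w p k + 4 * w) := by
        intro c hcr hcz hzr
        by_cases hB : Bk R X s k c
        · have hch : HasW X {u | Reg R X s c u ∧ Bk R X s k u} w := by
            refine hasW_chain hX hs (c := c) (fun a ha => ha.1.1) ?_ ?_
            · rintro a ⟨h1, h2⟩ x hx hxa
              exact ⟨h1.left hx hxa, h2.up (h1.right hx hxa)⟩
            · rintro a ⟨h1, h2⟩ b ⟨h3, h4⟩ har hbr hab ⟨h5, h6⟩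
              by_contra hne
              refine hv ⟨z, R.par a, a, b, hvz, hzc, hzr.trans h5, ?_, hne, har, hbr, rfl,
                hab.symm, h2, h4⟩
              intro e
              have l1 := h5.1.le
              have l2 := R.hd c hcr
              rw [hcz] at l2
              rw [e] at l1
              omega
          have := star (v := c) (D := {a | Reg R X s c a})
            (S := {u | Reg R X s c u ∧ Bk R X s k u}) (q := Fb w p k) hX hs
            (fun a ha => ha.1) ⟨Reg.self hzr.card, hB⟩ (fun a ha => Reg.par ha) ?_ hch ?_
          · exact this.mono le_rfl (by omega)
          · rintro a ⟨h1, h2⟩ x hx hxa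
            exact ⟨hx, h2.up (h1.right hx.1 hxa)⟩
          · intro x hx hxU _ _
            refine (ih x (fun h => hxU ⟨hx, h⟩)).mono (hinter c x hx) le_rfl
        · exact (ih c hB).mono le_rfl (by omega)
      have := star (v := z) (D := {a | Reg R X s z a}) (S := {z}) (q := Fb w p k + 4 * w) hX hs
        ?_ rfl (fun a ha => Reg.par ha) ?_ (hasW_singleton hX z) ?_
      · exact this.mono le_rfl (by omega)
      · rintro a rfl; exact Reg.self hzc.ge
      · rintro a rfl c hc h
        exact h.antisymm hc.1
      · intro c hc _ hcr hcz
        exact (hchild c hcr hcz hc).mono (hinter z c hc) le_rfl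
    by_cases hlt : (X v).card < s
    · refine (hasW_empty X _).mono ?_ le_rfl
      intro a ha
      have := ha.card'
      omega
    by_cases heq : (X v).card = s
    · exact (hz v (Reg.self heq.ge) heq).mono le_rfl (by simp only [Fb]; omega)
    have := star (v := v) (D := {a | Reg R X s v a}) (S := {a | Reg R X (s + 1) v a})
        (q := Fb w p k + 8 * w) hX hs (fun a ha => ha.anti (by omega)) (Reg.self (by omega))
        (fun a ha => Reg.par ha) ?_ (hp v) ?_
    · exact this.mono le_rfl (by simp only [Fb]; omega)
    · intro a ha c hc hca
      exact Reg.left ha hc.1 hca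
    · intro c hc hcS hcr hcp
      refine (hz c hc ?_).mono (hinter v c hc) le_rfl
      by_contra hne
      have := Reg.card hc
      exact hcS (Reg.step hcp hcr (by omega))

/-- total bound -/
def Pb (h w : ℕ) : ℕ → ℕ
  | 0 => 0
  | n + 1 => Fb w (Pb h w n) h

lemma reg_bound (hX : ∀ t, (X t).card ≤ w) (hs : Sep R X) {h : ℕ}
    (hno : ∀ s, 0 < s → ∀ v, ¬ Bk R X s h v) (n : ℕ) :
    ∀ s, 0 < s → s + n = w + 1 → ∀ v, HasW X {a | Reg R X s v a} (Pb h w n) := by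
  induction n with
  | zero =>
    intro s _ hsn v
    refine (hasW_empty X _).mono ?_ le_rfl
    intro a ha
    have := ha.card
    have := hX a
    omega
  | succ n ih =>
    intro s hs0 hsn v
    exact rank_bound hX hs (ih (s + 1) (by omega) (by omega)) h v (hno s hs0 v)

lemma univ_bound (hX : ∀ t, (X t).card ≤ w) (hs : Sep R X) {p : ℕ}
    (hp : ∀ v, HasW X {a | Reg R X 1 v a} p) : HasW X Set.univ (2 * w + p) := by
  classical
  set S : Set T := {u | X u = ∅ ∨ u = R.r ∨ X (R.par u) = ∅} with hS
  have hex : ∀ a, ∃ u, u ∈ S ∧ Anc R u a ∧ (a = u ∨ Reg R X 1 u a) := by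
    intro a
    induction h : R.d a using Nat.strong_induction_on generalizing a with
    | _ n ih =>
      by_cases ha : a ∈ S
      · exact ⟨a, ha, Anc.refl, Or.inl rfl⟩
      · have ha' := ha
        simp only [hS, Set.mem_ofPred_eq, not_or] at ha'
        obtain ⟨h1, h2, h3⟩ := ha'
        obtain ⟨u, u1, u2, u3⟩ := ih _ (by have := R.hd a h2; omega) (R.par a) rfl
        refine ⟨u, u1, Anc.step a h2 u2, Or.inr (Reg.step ?_ h2 ?_)⟩
        · rcases u3 with u3 | u3
          · rw [← u3]
            exact Reg.self (Finset.card_pos.2 (Finset.nonempty_iff_ne_empty.2 h3))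
          · exact u3
        · exact Finset.card_pos.2 (Finset.nonempty_iff_ne_empty.2 h1)
  choose β b1 b2 b3 using hex
  have hnS : ∀ u x, u ∈ S → u ≠ R.r → x ∈ X u → x ∈ X (R.par u) → False := by
    rintro u x (h | h | h) hr h1 h2
    · simp [h] at h1
    · exact hr h
    · simp [h] at h2
  -- no element of `S` strictly between
  have hbetween : ∀ a u, u ∈ S → Anc R u a → Anc R (β a) u → u = β a := by
    intro a u hu h1 h2
    by_contra hne
    rcases b3 a with h | h
    · exact hne ((h ▸ h1 : Anc R u (β a)).antisymm h2)
    · obtain ⟨k1, k2⟩ := h2.of_ne hne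
      have c1 := h.2 u h2 h1
      have c2 := h.2 _ k2 ((Anc.par k1).trans h1)
      rcases hu with h | h | h
      · simp [h] at c1
      · exact k1 h
      · simp [h] at c2
  have key : ∀ a b x, x ∈ X a → x ∈ X b → Anc R (β b) a → ¬ Anc R (β a) b → False := by
    intro a b x hxa hxb h1 h2
    obtain ⟨h3, h4⟩ := hs (β a) a b (b2 a) h2 x hxa hxb
    exact hnS _ x (b1 a) (fun h => h2 (h ▸ anc_root b)) h3 h4
  have hall : ∀ a b x, x ∈ X a → x ∈ X b → β a = β b := by
    intro a b x hxa hxb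
    by_cases h2 : Anc R (β a) b
    · by_cases h1 : Anc R (β b) a
      · rcases h2.total (b2 b) with h | h
        · exact (hbetween a _ (b1 b) h1 h).symm
        · exact hbetween b _ (b1 a) h2 h
      · exact absurd h2 (fun h => key b a x hxb hxa h h1)
    · obtain ⟨h3, h4⟩ := hs (β a) a b (b2 a) h2 x hxa hxb
      exact (hnS _ x (b1 a) (fun h => h2 (h ▸ anc_root b)) h3 h4).elim
  have hSs : HasW X S w := by
    refine (HasW.of_small (D := S) hX ∅ ?_).mono le_rfl (by simp)
    intro a ha b hb hab x hxa hxb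
    exfalso
    by_cases h : Anc R a b
    · have h' : ¬ Anc R b a := fun h' => hab (h.antisymm h')
      obtain ⟨h3, h4⟩ := hs b b a Anc.refl h' x hxb hxa
      exact hnS _ x hb (fun h => h' (h ▸ anc_root a)) h3 h4
    · obtain ⟨h3, h4⟩ := hs a a b Anc.refl h x hxa hxb
      exact hnS _ x ha (fun h' => h (h' ▸ anc_root b)) h3 h4
  have := HasW.subst (D := Set.univ) (S := S) (q := w + p) β (fun a _ => b1 a) hSs ?_ ?_
  · exact this.mono le_rfl (by omega)
  · intro u hu
    by_cases hc : (X u).card = 0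
    · refine (hasW_singleton hX u).mono ?_ (by omega)
      rintro a ⟨-, rfl⟩
      rcases b3 a with h | h
      · exact h
      · have := h.card'; omega
    · refine (hp u).mono ?_ (by omega)
      rintro a ⟨-, rfl⟩
      rcases b3 a with h | h
      · show Reg R X 1 (β a) a
        rw [← h] at hc ⊢
        exact Reg.self (by omega)
      · exact h
  · intro a _ b _ hab x hxa hxb
    exact absurd (hall a b x hxa hxb) hab

end rank

section tree
variable {T V : Type}

lemma exists_RT (Tr : SimpleGraph T) (hT : Tr.IsTree) : ∃ R : RT T,
    (∀ x, x ≠ R.r → Tr.Adj x (R.par x)) ∧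
    (∀ x y, Tr.Adj x y → (x ≠ R.r ∧ R.par x = y) ∨ (y ≠ R.r ∧ R.par y = x)) := by
  classical
  obtain ⟨r⟩ := hT.connected.nonempty
  have hex : ∀ x, x ≠ r → ∃ y, Tr.Adj x y ∧ Tr.dist x r = Tr.dist y r + 1 := by
    intro x hx
    obtain ⟨p, hp, hl⟩ := hT.connected.exists_path_of_dist x r
    cases p with
    | nil => exact absurd rfl hx
    | cons hadj q =>
      rename_i y
      refine ⟨y, hadj, ?_⟩
      rw [SimpleGraph.Walk.length_cons] at hl
      have h1 := SimpleGraph.dist_le q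
      have h2 := hT.dist_eq_dist_add_one_of_adj r hadj
      rw [SimpleGraph.dist_comm, SimpleGraph.dist_comm (u := r) (v := y)] at h2
      omega
  have huniq : ∀ x y y', Tr.Adj x y → Tr.Adj x y' → Tr.dist x r = Tr.dist y r + 1 →
      Tr.dist x r = Tr.dist y' r + 1 → y = y' := by
    intro x y y' h1 h2 h3 h4
    obtain ⟨p, hp, hl⟩ := hT.connected.exists_path_of_dist y r
    obtain ⟨p', hp', hl'⟩ := hT.connected.exists_path_of_dist y' r
    have q1 := (SimpleGraph.Walk.cons h1 p).isPath_of_length_eq_dist (by simp [hl, h3])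
    have q2 := (SimpleGraph.Walk.cons h2 p').isPath_of_length_eq_dist (by simp [hl', h4])
    have := hT.isAcyclic.path_unique ⟨_, q1⟩ ⟨_, q2⟩
    have := congrArg (fun z => z.1.snd) this
    simpa using this
  choose! par h1 h2 using hex
  refine ⟨⟨r, par, fun x => Tr.dist x r, h2⟩, h1, ?_⟩
  intro x y hxy
  have h3 := hT.dist_eq_dist_add_one_of_adj r hxy
  rw [SimpleGraph.dist_comm, SimpleGraph.dist_comm (u := r) (v := y)] at h3
  rcases h3 with h3 | h3
  · left
    have hx : x ≠ r := by rintro rfl; simp at h3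
    exact ⟨hx, huniq x _ _ (h1 x hx) hxy (h2 x hx) h3⟩
  · right
    have hy : y ≠ r := by rintro rfl; simp at h3
    exact ⟨hy, huniq y _ _ (h1 y hy) hxy.symm (h2 y hy) h3⟩

variable {Tr : SimpleGraph T} {R : RT T}

lemma exists_walk (hadj : ∀ x, x ≠ R.r → Tr.Adj x (R.par x)) {a b : T} (h : Anc R a b) :
    ∃ p : Tr.Walk b a, p.IsPath ∧ (∀ x ∈ p.support, Anc R a x ∧ Anc R x b) ∧
      ∀ e ∈ p.edges, ∃ x, x ≠ R.r ∧ e = s(x, R.par x) ∧ Anc R a x ∧ Anc R x b ∧ x ≠ a := by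
  induction h with
  | refl => exact ⟨SimpleGraph.Walk.nil, by simp, by simp [Anc.refl], by simp⟩
  | step b hb h ih =>
    obtain ⟨p, p1, p2, p3⟩ := ih
    refine ⟨SimpleGraph.Walk.cons (hadj b hb) p, ?_, ?_, ?_⟩
    · rw [SimpleGraph.Walk.cons_isPath_iff]
      refine ⟨p1, fun hm => ?_⟩
      have := (p2 b hm).2.le
      have := R.hd b hb
      omega
    · intro x hx
      rw [SimpleGraph.Walk.support_cons, List.mem_cons] at hx
      rcases hx with rfl | hx
      · exact ⟨Anc.step x hb h, Anc.refl⟩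
      · exact ⟨(p2 x hx).1, (p2 x hx).2.trans (Anc.par hb)⟩
    · intro e he
      rw [SimpleGraph.Walk.edges_cons, List.mem_cons] at he
      rcases he with rfl | he
      · refine ⟨b, hb, rfl, Anc.step b hb h, Anc.refl, ?_⟩
        rintro rfl
        have := h.le
        have := R.hd b hb
        omega
      · obtain ⟨x, x1, x2, x3, x4, x5⟩ := p3 e he
        exact ⟨x, x1, x2, x3, x4.trans (Anc.par hb), x5⟩

lemma path_edges (hT : Tr.IsTree) (hadj : ∀ x, x ≠ R.r → Tr.Adj x (R.par x)) {a b : T}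
    (h : Anc R a b) (p : Tr.Walk b a) (hp : p.IsPath) :
    ∀ e ∈ p.edges, ∃ x, x ≠ R.r ∧ e = s(x, R.par x) ∧ Anc R a x ∧ Anc R x b ∧ x ≠ a := by
  obtain ⟨q, q1, _, q3⟩ := exists_walk hadj h
  have : p = q := congrArg Subtype.val (hT.isAcyclic.path_unique ⟨p, hp⟩ ⟨q, q1⟩)
  rw [this]; exact q3

lemma path_edges' (hT : Tr.IsTree) (hadj : ∀ x, x ≠ R.r → Tr.Adj x (R.par x)) {a b : T}
    (h : Anc R a b) (p : Tr.Walk a b) (hp : p.IsPath) :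
    ∀ e ∈ p.edges, ∃ x, x ≠ R.r ∧ e = s(x, R.par x) ∧ Anc R a x ∧ Anc R x b ∧ x ≠ a := by
  intro e he
  exact path_edges hT hadj h p.reverse hp.reverse e (by simpa using he)

lemma path_support (hT : Tr.IsTree) (hadj : ∀ x, x ≠ R.r → Tr.Adj x (R.par x)) {v a b : T}
    (ha : Anc R v a) (hb : Anc R v b) (p : Tr.Walk a b) (hp : p.IsPath) :
    ∀ x ∈ p.support, Anc R v x ∧ (Anc R x a ∨ Anc R x b) := by
  classical
  obtain ⟨q, _, q2, _⟩ := exists_walk hadj ha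
  obtain ⟨q', _, q2', _⟩ := exists_walk hadj hb
  have : p = (q.append q'.reverse).toPath.1 :=
    congrArg Subtype.val (hT.isAcyclic.path_unique ⟨p, hp⟩ _)
  intro x hx
  rw [this] at hx
  have := SimpleGraph.Walk.support_toPath_subset_support _ hx
  rw [SimpleGraph.Walk.mem_support_append_iff] at this
  rcases this with h | h
  · exact ⟨(q2 x h).1, Or.inl (q2 x h).2⟩
  · have h : x ∈ q'.support := by simpa using h
    exact ⟨(q2' x h).1, Or.inr (q2' x h).2⟩

lemma edge_inj {x y : T} (hx : x ≠ R.r) (hy : y ≠ R.r)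
    (h : s(x, R.par x) = s(y, R.par y)) : x = y := by
  rw [Sym2.eq_iff] at h
  rcases h with h | h
  · exact h.1
  · have h1 := R.hd x hx
    have h2 := R.hd y hy
    rw [h.2] at h1
    rw [← h.1] at h2
    omega

variable [Fintype T] [Fintype V] {X : T → Finset V}

lemma sep_of (hT : Tr.IsTree)
    (hadj' : ∀ x y, Tr.Adj x y → (x ≠ R.r ∧ R.par x = y) ∨ (y ≠ R.r ∧ R.par y = x))
    (hX : ∀ (t₁ t₂ t₃ : T) (p : Tr.Walk t₁ t₃), p.IsPath → t₂ ∈ p.support →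
      ∀ v : V, v ∈ X t₁ → v ∈ X t₃ → v ∈ X t₂) : Sep R X := by
  intro c a b hca hcb x hxa hxb
  obtain ⟨p, hp, _⟩ := hT.connected.exists_path_of_dist a b
  obtain ⟨d, hd, h1, h2⟩ := p.exists_boundary_dart {y | Anc R c y} hca hcb
  simp only [Set.mem_ofPred_eq] at h1 h2
  have m1 := p.dart_fst_mem_support_of_mem_darts hd
  have m2 := p.dart_snd_mem_support_of_mem_darts hd
  rcases hadj' _ _ d.adj with ⟨k1, k2⟩ | ⟨k1, k2⟩
  · have e : d.fst = c := by
      by_contra hne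
      exact h2 (k2 ▸ (h1.of_ne hne).2)
    have e2 : d.snd = R.par c := by rw [← e, k2]
    rw [e] at m1
    rw [e2] at m2
    exact ⟨hX a _ b p hp m1 x hxa hxb, hX a _ b p hp m2 x hxa hxb⟩
  · exact absurd (Anc.step _ k1 (by rw [k2]; exact h1)) h2

end tree

section casc
variable {T V : Type} [Fintype T] [Fintype V] {Tr : SimpleGraph T} {R : RT T} {X : T → Finset V}

/-- the recursively chosen branch vertices -/
def vvf (C : ℕ → T → Bool → T) (h : ℕ) (v0 : T) : List Bool → T
  | [] => v0
  | b :: σ => C (h - σ.length) (vvf C h v0 σ) b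

lemma exists_skeleton {s h : ℕ} {v0 : T} (hB : Bk R X s h v0) :
    ∃ vv zz mm : List Bool → T,
      (∀ σ, σ.length ≤ h → Reg R X s v0 (vv σ) ∧ Reg R X s (vv σ) (zz σ) ∧ (X (zz σ)).card = s) ∧
      (∀ σ, σ.length + 1 ≤ h → Reg R X s (zz σ) (mm σ) ∧ mm σ ≠ zz σ ∧
        vv (false :: σ) ≠ vv (true :: σ) ∧
        ∀ b, vv (b :: σ) ≠ R.r ∧ R.par (vv (b :: σ)) = mm σ) := by
  have hex : ∀ k v, Bk R X s k v → ∃ (z m : T) (c : Bool → T), Reg R X s v z ∧ (X z).card = s ∧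
      (0 < k → Reg R X s z m ∧ m ≠ z ∧ c false ≠ c true ∧
        ∀ b, c b ≠ R.r ∧ R.par (c b) = m ∧ Bk R X s (k - 1) (c b)) := by
    intro k v hk
    cases k with
    | zero =>
      obtain ⟨z, h1, h2⟩ := hk
      exact ⟨z, z, fun _ => z, h1, h2, fun h => absurd h (lt_irrefl _)⟩
    | succ k =>
      obtain ⟨z, m, c1, c2, h1, h2, h3, h4, h5, h6, h7, h8, h9, h10, h11⟩ := hk
      refine ⟨z, m, fun b => if b then c2 else c1, h1, h2, fun _ => ⟨h3, h4, by simpa using h5, ?_⟩⟩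
      intro b
      cases b
      · simpa using ⟨h6, h8, h10⟩
      · simpa using ⟨h7, h9, h11⟩
  have hne : Nonempty T := ⟨v0⟩
  choose! Z M C c1 c2 c3 c4 c5 c6 using hex
  have hBk : ∀ σ : List Bool, σ.length ≤ h →
      Bk R X s (h - σ.length) (vvf C h v0 σ) ∧ Reg R X s v0 (vvf C h v0 σ) := by
    intro σ
    induction σ with
    | nil =>
      intro _
      refine ⟨hB, Reg.self (c1 h v0 hB).card'⟩
    | cons b σ ih =>
      intro hl
      rw [List.length_cons] at hl
      obtain ⟨i1, i2⟩ := ih (by omega)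
      have hpos : 0 < h - σ.length := by omega
      obtain ⟨k1, k2, k3⟩ := c6 _ _ i1 hpos b
      have e : h - σ.length - 1 = h - (b :: σ).length := by rw [List.length_cons]; omega
      rw [e] at k3
      have r1 := c1 _ _ i1
      have r2 := c3 _ _ i1 hpos
      refine ⟨k3, (i2.trans (r1.trans r2)).trans ?_⟩
      have hc := (c1 _ _ k3).card'
      show Reg R X s _ (C (h - σ.length) (vvf C h v0 σ) b)
      refine Reg.step ?_ k1 hc
      rw [k2]
      exact Reg.self r2.card
  refine ⟨vvf C h v0, fun σ => Z (h - σ.length) (vvf C h v0 σ),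
    fun σ => M (h - σ.length) (vvf C h v0 σ), ?_, ?_⟩
  · intro σ hσ
    obtain ⟨i1, i2⟩ := hBk σ hσ
    exact ⟨i2, c1 _ _ i1, c2 _ _ i1⟩
  · intro σ hσ
    obtain ⟨i1, i2⟩ := hBk σ (by omega)
    have hpos : 0 < h - σ.length := by omega
    refine ⟨c3 _ _ i1 hpos, c4 _ _ i1 hpos, c5 _ _ i1 hpos, fun b => ?_⟩
    obtain ⟨k1, k2, k3⟩ := c6 _ _ i1 hpos b
    exact ⟨k1, k2⟩

lemma Tgraph_adj {h : ℕ} {t t₁ : TVert h} (hadj : (Tgraph h).Adj t t₁) :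
    (∃ σ, ∃ hσ : σ.length + 1 ≤ h, t = Sum.inr ⟨σ, hσ⟩ ∧
      t₁ = Sum.inl ⟨σ, Nat.le_of_succ_le hσ⟩) ∨
    (∃ b σ, ∃ hσ : σ.length + 1 ≤ h, t = Sum.inl ⟨b :: σ, by simpa using hσ⟩ ∧
      t₁ = Sum.inr ⟨σ, hσ⟩) ∨
    (∃ σ, ∃ hσ : σ.length + 1 ≤ h, t = Sum.inl ⟨σ, Nat.le_of_succ_le hσ⟩ ∧
      t₁ = Sum.inr ⟨σ, hσ⟩) ∨
    (∃ b σ, ∃ hσ : σ.length + 1 ≤ h, t = Sum.inr ⟨σ, hσ⟩ ∧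
      t₁ = Sum.inl ⟨b :: σ, by simpa using hσ⟩) := by
  rw [Tgraph, SimpleGraph.fromEdgeSet_adj] at hadj
  obtain ⟨⟨σ, hσ, h1 | ⟨b, h1⟩⟩, -⟩ := hadj <;> rw [Sym2.eq_iff] at h1 <;>
    rcases h1 with ⟨h1, h2⟩ | ⟨h1, h2⟩
  · exact Or.inl ⟨σ, hσ, h1, h2⟩
  · exact Or.inr (Or.inr (Or.inl ⟨σ, hσ, h1, h2⟩))
  · exact Or.inr (Or.inr (Or.inr ⟨b, σ, hσ, h1, h2⟩))
  · exact Or.inr (Or.inl ⟨b, σ, hσ, h1, h2⟩)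

lemma cascade_of_Bk (hT : Tr.IsTree) (hadj : ∀ x, x ≠ R.r → Tr.Adj x (R.par x))
    {s h : ℕ} {v0 : T} (hB : Bk R X s h v0) : ∃ η : TVert h → T, IsCascade Tr X h s η := by
  obtain ⟨vv, zz, mm, H1, H2⟩ := exists_skeleton hB
  -- basic ancestor relations
  have A1 : ∀ σ, σ.length ≤ h → Anc R (vv σ) (zz σ) := fun σ hσ => (H1 σ hσ).2.1.1
  have A2 : ∀ σ, σ.length + 1 ≤ h → Anc R (zz σ) (mm σ) := fun σ hσ => (H2 σ hσ).1.1
  have A3 : ∀ b σ, σ.length + 1 ≤ h → Anc R (mm σ) (vv (b :: σ)) := fun b σ hσ => by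
    obtain ⟨k1, k2⟩ := (H2 σ hσ).2.2.2 b
    rw [← k2]; exact Anc.par k1
  have A4 : ∀ b σ, σ.length + 1 ≤ h → Anc R (vv σ) (vv (b :: σ)) := fun b σ hσ =>
    ((A1 σ (by omega)).trans (A2 σ hσ)).trans (A3 b σ hσ)
  have A5 : ∀ b σ, σ.length + 1 ≤ h → Anc R (mm σ) (zz (b :: σ)) := fun b σ hσ =>
    (A3 b σ hσ).trans (A1 _ (by simpa using hσ))
  -- same length
  have L1 : ∀ σ τ : List Bool, σ.length = τ.length → σ.length ≤ h → ∀ x, Anc R (vv σ) x →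
      Anc R (vv τ) x → σ = τ := by
    intro σ
    induction σ with
    | nil => intro τ e _ _ _ _; exact (List.length_eq_zero_iff.1 e.symm).symm
    | cons b σ ih =>
      intro τ e hl x h1 h2
      cases τ with
      | nil => simp at e
      | cons b' τ =>
        simp only [List.length_cons] at e hl
        have e1 : σ = τ := ih τ (by omega) (by omega) x ((A4 b σ hl).trans h1)
          ((A4 b' τ (by omega)).trans h2)
        subst e1
        obtain ⟨-, -, k3, k4⟩ := H2 σ hl
        have e2 := child_disj (k4 b).1 (k4 b').1 ((k4 b).2.trans (k4 b').2.symm) h1 h2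
        cases b <;> cases b' <;> first | rfl | exact absurd e2 k3 | exact absurd e2.symm k3
  have L2 : ∀ (ρ σ : List Bool), ρ ≠ [] → (ρ ++ σ).length ≤ h →
      R.d (mm σ) < R.d (vv (ρ ++ σ)) ∧ Anc R (vv σ) (vv (ρ ++ σ)) := by
    intro ρ σ
    induction ρ with
    | nil => intro hne; exact absurd rfl hne
    | cons b ρ ih =>
      intro _ hl
      simp only [List.cons_append, List.length_cons] at hl ⊢
      have q1 := A4 b (ρ ++ σ) hl
      by_cases e : ρ = []
      · subst e
        simp only [List.nil_append] at hl q1 ⊢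
        obtain ⟨k1, k2⟩ := (H2 σ hl).2.2.2 b
        have := R.hd _ k1
        rw [k2] at this
        exact ⟨by omega, q1⟩
      · obtain ⟨i1, i2⟩ := ih e (by omega)
        exact ⟨lt_of_lt_of_le i1 q1.le, i2.trans q1⟩
  have L3 : ∀ σ τ : List Bool, σ.length < τ.length → τ.length ≤ h → ∀ x, Anc R (vv σ) x →
      Anc R (vv τ) x → R.d (mm σ) < R.d (vv τ) := by
    intro σ τ hl hh x h1 h2
    have e := List.take_append_drop (τ.length - σ.length) τ
    have hne : τ.take (τ.length - σ.length) ≠ [] := by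
      intro h0
      have := congrArg List.length h0
      simp only [List.length_take, List.length_nil] at this
      omega
    obtain ⟨k1, k2⟩ := L2 _ (τ.drop (τ.length - σ.length)) hne (by rw [e]; exact hh)
    rw [e] at k1 k2
    have e2 : σ = τ.drop (τ.length - σ.length) :=
      L1 _ _ (by rw [List.length_drop]; omega) (by omega) x h1 (k2.trans h2)
    rw [e2]
    exact k1
  set η : TVert h → T := Sum.elim (fun σ => zz σ.1) (fun σ => mm σ.1) with hη
  have Nd : ∀ σ τ : List Bool, σ.length < τ.length → τ.length ≤ h → ∀ x y,
      (x = zz σ ∨ x = mm σ) → (y = zz τ ∨ (τ.length + 1 ≤ h ∧ y = mm τ)) → x ≠ y := by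
    rintro σ τ hl hh x y hx hy rfl
    have g1 : Anc R (vv σ) x ∧ R.d x ≤ R.d (mm σ) := by
      have q1 := A1 σ (by omega)
      have q2 := A2 σ (by omega)
      rcases hx with rfl | rfl
      · exact ⟨q1, q2.le⟩
      · exact ⟨q1.trans q2, le_rfl⟩
    have g2 : Anc R (vv τ) x := by
      rcases hy with rfl | ⟨hy, rfl⟩
      · exact A1 τ hh
      · exact (A1 τ hh).trans (A2 τ hy)
    have := L3 σ τ hl hh x g1.1 g2
    have := g2.le
    omega
  have Ne1 : ∀ σ τ : List Bool, ∀ x y, τ.length ≤ h → σ.length ≤ h →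
      (x = zz σ ∨ (σ.length + 1 ≤ h ∧ x = mm σ)) → (y = zz τ ∨ (τ.length + 1 ≤ h ∧ y = mm τ)) →
      x = y → σ = τ := by
    intro σ τ x y hτ hσ hx hy e
    rcases lt_trichotomy σ.length τ.length with hl | hl | hl
    · exact absurd e (Nd σ τ hl hτ x y (hx.imp id And.right) hy)
    · have g : ∀ ρ : List Bool, ρ.length ≤ h → ∀ y, (y = zz ρ ∨ (ρ.length + 1 ≤ h ∧ y = mm ρ)) →
          Anc R (vv ρ) y := by
        rintro ρ hρ y (rfl | ⟨hy, rfl⟩)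
        · exact A1 ρ hρ
        · exact (A1 ρ hρ).trans (A2 ρ hy)
      subst e
      exact L1 σ τ hl hσ x (g σ hσ x hx) (g τ hτ x hy)
    · exact absurd e.symm (Nd τ σ hl hσ y x (hy.imp id And.right) hx)
  have hinj : Function.Injective η := by
    rintro (⟨σ, hσ⟩ | ⟨σ, hσ⟩) (⟨τ, hτ⟩ | ⟨τ, hτ⟩) e
    · have : σ = τ := Ne1 σ τ _ _ hτ hσ (Or.inl rfl) (Or.inl rfl) e
      subst this; rfl
    · have : σ = τ := Ne1 σ τ _ _ (by omega) hσ (Or.inl rfl) (Or.inr ⟨hτ, rfl⟩) e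
      subst this
      exact absurd e.symm (H2 σ hτ).2.1
    · have : σ = τ := Ne1 σ τ _ _ hτ (by omega) (Or.inr ⟨hσ, rfl⟩) (Or.inl rfl) e
      subst this
      exact absurd e (H2 σ hσ).2.1
    · have : σ = τ := Ne1 σ τ _ _ (by omega) (by omega) (Or.inr ⟨hσ, rfl⟩) (Or.inr ⟨hτ, rfl⟩) e
      subst this; rfl
  refine ⟨η, ⟨hinj, ?_⟩, ?_, ?_⟩
  · intro t t₁ t₂ hadj1 hadj2 hne p₁ p₂ hp₁ hp₂ e he1 he2
    rcases Tgraph_adj hadj1 with ⟨σ, hσ, rfl, rfl⟩ | ⟨b, σ, hσ, rfl, rfl⟩ | ⟨σ, hσ, rfl, rfl⟩ |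
      ⟨b, σ, hσ, rfl, rfl⟩
    · obtain ⟨x, x1, x2, x3, x4, x5⟩ := path_edges hT hadj (A2 σ hσ) p₁ hp₁ e he1
      rcases Tgraph_adj hadj2 with ⟨τ, hτ, e1, rfl⟩ | ⟨b', τ, hτ, e1, rfl⟩ | ⟨τ, hτ, e1, rfl⟩ |
        ⟨b', τ, hτ, e1, rfl⟩
      · simp only [Sum.inr.injEq, Subtype.mk.injEq] at e1
        subst e1; exact hne rfl
      · simp at e1
      · simp at e1
      · simp only [Sum.inr.injEq, Subtype.mk.injEq] at e1
        subst e1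
        obtain ⟨y, y1, y2, y3, y4, y5⟩ := path_edges' hT hadj (A5 b' σ hσ) p₂ hp₂ e he2
        have := edge_inj x1 y1 (x2.symm.trans y2)
        subst this
        exact y5 (x4.antisymm y3)
    · obtain ⟨x, x1, x2, x3, x4, x5⟩ := path_edges hT hadj (A5 b σ hσ) p₁ hp₁ e he1
      rcases Tgraph_adj hadj2 with ⟨τ, hτ, e1, rfl⟩ | ⟨b', τ, hτ, e1, rfl⟩ | ⟨τ, hτ, e1, rfl⟩ |
        ⟨b', τ, hτ, e1, rfl⟩
      · simp at e1
      · simp only [Sum.inl.injEq, Subtype.mk.injEq, List.cons.injEq] at e1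
        obtain ⟨rfl, rfl⟩ := e1
        exact hne rfl
      · simp only [Sum.inl.injEq, Subtype.mk.injEq] at e1
        subst e1
        obtain ⟨y, y1, y2, y3, y4, y5⟩ := path_edges' hT hadj (A2 _ hτ) p₂ hp₂ e he2
        have := edge_inj x1 y1 (x2.symm.trans y2)
        subst this
        exact y5 (x4.antisymm y3)
      · simp at e1
    · obtain ⟨x, x1, x2, x3, x4, x5⟩ := path_edges' hT hadj (A2 σ hσ) p₁ hp₁ e he1
      rcases Tgraph_adj hadj2 with ⟨τ, hτ, e1, rfl⟩ | ⟨b', τ, hτ, e1, rfl⟩ | ⟨τ, hτ, e1, rfl⟩ |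
        ⟨b', τ, hτ, e1, rfl⟩
      · simp at e1
      · simp only [Sum.inl.injEq, Subtype.mk.injEq] at e1
        subst e1
        obtain ⟨y, y1, y2, y3, y4, y5⟩ := path_edges hT hadj (A5 b' τ hτ) p₂ hp₂ e he2
        have := edge_inj x1 y1 (x2.symm.trans y2)
        subst this
        exact x5 (y4.antisymm x3)
      · simp only [Sum.inl.injEq, Subtype.mk.injEq] at e1
        subst e1; exact hne rfl
      · simp at e1
    · obtain ⟨x, x1, x2, x3, x4, x5⟩ := path_edges' hT hadj (A5 b σ hσ) p₁ hp₁ e he1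
      rcases Tgraph_adj hadj2 with ⟨τ, hτ, e1, rfl⟩ | ⟨b', τ, hτ, e1, rfl⟩ | ⟨τ, hτ, e1, rfl⟩ |
        ⟨b', τ, hτ, e1, rfl⟩
      · simp only [Sum.inr.injEq, Subtype.mk.injEq] at e1
        subst e1
        obtain ⟨y, y1, y2, y3, y4, y5⟩ := path_edges hT hadj (A2 σ hσ) p₂ hp₂ e he2
        have := edge_inj x1 y1 (x2.symm.trans y2)
        subst this
        exact x5 (y4.antisymm x3)
      · simp at e1
      · simp at e1
      · simp only [Sum.inr.injEq, Subtype.mk.injEq] at e1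
        subst e1
        obtain ⟨y, y1, y2, y3, y4, y5⟩ := path_edges' hT hadj (A5 b' σ hσ) p₂ hp₂ e he2
        have := edge_inj x1 y1 (x2.symm.trans y2)
        subst this
        -- `x` lies below both children
        have g : ∀ b, Anc R x (zz (b :: σ)) → Anc R (vv (b :: σ)) x := by
          intro b hb
          refine (A1 (b :: σ) (by simpa using hσ)).comp hb ?_
          obtain ⟨k1, k2⟩ := (H2 σ hσ).2.2.2 b
          have q1 := R.hd _ k1
          have q2 := x3.lt x5
          rw [k2] at q1
          have q3 : R.d (mm σ) < R.d x := q2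
          omega
        have e3 : b :: σ = b' :: σ := L1 _ _ (by simp) (by simpa using hσ) x (g b x4) (g b' y4)
        simp only [List.cons.injEq, and_true] at e3
        subst e3
        exact hne rfl
  · rintro ⟨σ, hσ⟩
    exact (H1 σ hσ).2.2
  · have hreg : ∀ a, Reg R X s v0 (η a) := by
      rintro (⟨σ, hσ⟩ | ⟨σ, hσ⟩)
      · exact (H1 σ hσ).1.trans (H1 σ hσ).2.1
      · have hσ' : σ.length ≤ h := by omega
        exact ((H1 σ hσ').1.trans (H1 σ hσ').2.1).trans (H2 σ hσ).1
    rintro t ⟨a₁, a₂, p, hp, ht⟩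
    obtain ⟨h1, h2 | h2⟩ := path_support hT hadj (hreg a₁).1 (hreg a₂).1 p hp t ht
    · exact (hreg a₁).2 t h1 h2
    · exact (hreg a₂).2 t h1 h2

end casc

lemma pathwidth_le {T V : Type} [Fintype T] [Fintype V] {G : SimpleGraph V} {X : T → Finset V}
    (h1 : ∀ v : V, ∃ t, v ∈ X t) (h2 : ∀ u v : V, G.Adj u v → ∃ t, u ∈ X t ∧ v ∈ X t) {p : ℕ}
    (h : HasW X Set.univ p) : pathwidth G ≤ p := by
  obtain ⟨f, hf, hb⟩ := h
  obtain ⟨N, hN⟩ : ∃ N : ℕ, ∀ t, f t < N := by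
    refine ⟨(Finset.univ.sup f) + 1, fun t => ?_⟩
    have := Finset.le_sup (f := f) (Finset.mem_univ t)
    omega
  refine Nat.sInf_le ⟨N, fun i => bag X Set.univ f i, ⟨?_, ?_, ?_⟩, fun i => ?_⟩
  · intro v
    obtain ⟨t, ht⟩ := h1 v
    exact ⟨⟨f t, hN t⟩, mem_bag.2 ⟨t, trivial, t, trivial, le_rfl, le_rfl, ht, ht⟩⟩
  · intro u v huv
    obtain ⟨t, ht, ht'⟩ := h2 u v huv
    exact ⟨⟨f t, hN t⟩, mem_bag.2 ⟨t, trivial, t, trivial, le_rfl, le_rfl, ht, ht⟩,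
      mem_bag.2 ⟨t, trivial, t, trivial, le_rfl, le_rfl, ht', ht'⟩⟩
  · intro i j k hij hjk v hi hk
    rw [mem_bag] at hi hk ⊢
    obtain ⟨a, _, _, _, a1, _, a2, _⟩ := hi
    obtain ⟨_, _, b, _, _, b1, _, b2⟩ := hk
    have e1 : (i : ℕ) ≤ j := hij
    have e2 : (j : ℕ) ≤ k := hjk
    exact ⟨a, trivial, b, trivial, by omega, by omega, a2, b2⟩
  · exact (hb i).trans (Nat.le_succ p)

end CascadeProof

/-- Lemma 4.4. For all positive integers `h` and `w` there is a positive
integer `p` such that if `G` has path-width at least `p`, then in any tree-decomposition of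
`G` of width less than `w` there is a cascade of height `h` (of some size). -/
theorem cascade_exists_of_large_pathwidth (h w : ℕ) (hh : 0 < h) (hw : 0 < w) :
    ∃ p : ℕ, 0 < p ∧ ∀ (V : Type) [Fintype V] (G : SimpleGraph V), p ≤ pathwidth G →
      ∀ (T : Type) [Fintype T] (Tr : SimpleGraph T) (X : T → Finset V),
        IsTreeDecomp G Tr X → (∀ t, (X t).card ≤ w) →
          ∃ (s : ℕ) (η : TVert h → T), 0 < s ∧ IsCascade Tr X h s η := by
  refine ⟨2 * w + CascadeProof.Pb h w w + 1, Nat.succ_pos _, ?_⟩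
  intro V _ G hpw T _ Tr X hTD hX
  obtain ⟨hT, h1, h2, h3⟩ := hTD
  obtain ⟨R, hadj, hadj'⟩ := CascadeProof.exists_RT Tr hT
  have hs : CascadeProof.Sep R X := CascadeProof.sep_of hT hadj' h3
  by_contra hno
  have hB : ∀ s, 0 < s → ∀ v, ¬ CascadeProof.Bk R X s h v := by
    intro s hs0 v hv
    obtain ⟨η, hη⟩ := CascadeProof.cascade_of_Bk hT hadj hv
    exact hno ⟨s, η, hs0, hη⟩
  have hreg := CascadeProof.reg_bound hX hs hB w 1 one_pos (by omega)
  have := CascadeProof.pathwidth_le h1 h2 (CascadeProof.univ_bound hX hs hreg)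
  omega
end
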